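/- arXiv:2501.06840 — 6 statements merged into one kernel-verified Lean document; each statement's English description precedes it below -/
import Mathlib

section
/- Let n ≥ 1 and m ≥ 1 be integers. Let G be a closed connected subgroup of GL(n), let V be a complex linear subspace of the space T⁺(n) of strictly upper-triangular n×n complex matrices, and let L be a nonempty subset of ℂⁿ such that: (i) L ∖ Δ_L is dense in L, and (ii) for every connected component C of L ∖ Δ_L, the group {σ ∈ G ∩ Sₙ : σ·C = C} acts transitively on {1,…,n}. Then there exists a continuous spectrum-shrinking map φ : Ad_G T_{L,V} → M_m if and only if n divides m; and in that case every such φ satisfies the equality of characteristic polynomials k_{φ(X)} = (k_X)^{m/n} for all X ∈ Ad_G T_{L,V}. -/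
open Matrix

lemma aux_eval_charpoly_closed {T : Type*} [TopologicalSpace T] {n m : ℕ}
    (l : T → Fin n → ℂ) (hl : Continuous l)
    (A : T → Matrix (Fin m) (Fin m) ℂ) (hA : Continuous A) (f : Fin n → ℕ) :
    IsClosed {t | (A t).charpoly =
      ∏ i, (Polynomial.X - Polynomial.C (l t i)) ^ f i} := by
  have : {t | (A t).charpoly = ∏ i, (Polynomial.X - Polynomial.C (l t i)) ^ f i}
      = ⋂ z : ℂ, {t | (Matrix.scalar (Fin m) z - A t).det = ∏ i, (z - l t i) ^ f i} := by
    ext t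
    simp only [Set.mem_ofPred_eq, Set.mem_iInter]
    constructor
    · intro h z
      rw [← Matrix.eval_charpoly, h]
      simp [Polynomial.eval_prod]
    · intro h
      apply Polynomial.funext
      intro z
      rw [Matrix.eval_charpoly, h z]
      simp [Polynomial.eval_prod]
  rw [this]
  refine isClosed_iInter fun z => isClosed_eq ?_ ?_
  · exact (continuous_const.sub hA).matrix_det
  · exact continuous_finsetProd _ fun i _ =>
      (continuous_const.sub ((continuous_apply i).comp hl)).pow _

lemma aux_count {n : ℕ} (l : Fin n → ℂ) (hl : Function.Injective l) (f : Fin n → ℕ) (j : Fin n) :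
    (∏ i, (Polynomial.X - Polynomial.C (l i)) ^ f i).roots.count (l j) = f j := by
  rw [Polynomial.roots_prod]
  · simp [Polynomial.roots_pow, Multiset.count_bind, Multiset.count_singleton, hl.eq_iff]
    rw [List.sum_ofFn]
    simp
  · exact Finset.prod_ne_zero_iff.2 fun i _ => pow_ne_zero _ (Polynomial.X_sub_C_ne_zero _)

lemma aux_exists {n m : ℕ} (l : Fin n → ℂ) (hl : Function.Injective l)
    (A : Matrix (Fin m) (Fin m) ℂ) (hs : spectrum ℂ A ⊆ Set.range l) :
    A.charpoly = ∏ i, (Polynomial.X - Polynomial.C (l i)) ^ (A.charpoly.roots.count (l i)) := by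
  have h1 : A.charpoly.Splits := IsAlgClosed.splits _
  have h2 := h1.eq_prod_roots_of_monic A.charpoly_monic
  conv_lhs => rw [h2]
  rw [Finset.prod_multiset_map_count]
  have : A.charpoly.roots.toFinset ⊆ Finset.univ.image l := by
    intro z hz
    simp only [Multiset.mem_toFinset] at hz
    have : z ∈ spectrum ℂ A :=
      Matrix.mem_spectrum_iff_isRoot_charpoly.2 (Polynomial.isRoot_of_mem_roots hz)
    obtain ⟨i, rfl⟩ := hs this
    simp
  rw [Finset.prod_subset this, Finset.prod_image (fun _ _ _ _ h => hl h)]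
  intro x _ hx
  rw [Multiset.mem_toFinset] at hx
  rw [Multiset.count_eq_zero_of_notMem hx, pow_zero]

lemma aux_const {T : Type*} [TopologicalSpace T] [PreconnectedSpace T] [Nonempty T] {n m : ℕ}
    (l : T → Fin n → ℂ) (hl : Continuous l) (hinj : ∀ t, Function.Injective (l t))
    (A : T → Matrix (Fin m) (Fin m) ℂ) (hA : Continuous A)
    (hs : ∀ t, spectrum ℂ (A t) ⊆ Set.range (l t)) :
    ∃ f : Fin n → ℕ, ∀ t, (A t).charpoly =
      ∏ i, (Polynomial.X - Polynomial.C (l t i)) ^ f i := by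
  have hb : ∀ t i, (A t).charpoly.roots.count (l t i) < m + 1 := by
    intro t i
    have h1 := Multiset.count_le_card (l t i) (A t).charpoly.roots
    have h2 := Polynomial.card_roots' (A t).charpoly
    rw [Matrix.charpoly_natDegree_eq_dim, Fintype.card_fin] at h2
    omega
  let F : T → Fin n → Fin (m + 1) := fun t i => ⟨_, hb t i⟩
  have hF : ∀ t, (A t).charpoly =
      ∏ i, (Polynomial.X - Polynomial.C (l t i)) ^ (F t i : ℕ) :=
    fun t => aux_exists (l t) (hinj t) (A t) (hs t)
  have hc : Continuous F := by
    rw [continuous_iff_isClosed]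
    intro S _
    have : F ⁻¹' S = ⋃ f ∈ S, {t | (A t).charpoly =
        ∏ i, (Polynomial.X - Polynomial.C (l t i)) ^ (f i : ℕ)} := by
      ext t
      simp only [Set.mem_preimage, Set.mem_iUnion, Set.mem_ofPred_eq, exists_prop]
      constructor
      · intro h
        exact ⟨_, h, hF t⟩
      · rintro ⟨f, hf, h⟩
        have : F t = f := by
          funext j
          apply Fin.ext
          change (A t).charpoly.roots.count (l t j) = f j
          rw [h, aux_count (l t) (hinj t) (fun i => (f i : ℕ))]
        rwa [this]
    rw [this]
    exact (Set.toFinite S).isClosed_biUnion fun f _ =>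
      aux_eval_charpoly_closed l hl A hA (fun i => (f i : ℕ))
  obtain ⟨t0⟩ := (inferInstance : Nonempty T)
  refine ⟨fun i => F t0 i, fun t => ?_⟩
  have : F t = F t0 := PreconnectedSpace.constant inferInstance hc
  rw [hF t, this]

lemma aux_charpoly {n : ℕ} (g : Matrix (Fin n) (Fin n) ℂ) (hg : IsUnit g) (l : Fin n → ℂ)
    (v : Matrix (Fin n) (Fin n) ℂ) (hv : ∀ i j : Fin n, j ≤ i → v i j = 0) :
    (g * (Matrix.diagonal l + v) * g⁻¹).charpoly =
      ∏ i, (Polynomial.X - Polynomial.C (l i)) := by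
  obtain ⟨u, rfl⟩ := hg
  rw [Matrix.charpoly_units_conj, Matrix.charpoly_of_upperTriangular]
  · simp [hv _ _ le_rfl]
  · intro i j hij
    have : j < i := hij
    simp [hv i j this.le, Matrix.diagonal_apply_ne _ this.ne']

lemma aux_spectrum {n : ℕ} (g : Matrix (Fin n) (Fin n) ℂ) (hg : IsUnit g) (l : Fin n → ℂ)
    (v : Matrix (Fin n) (Fin n) ℂ) (hv : ∀ i j : Fin n, j ≤ i → v i j = 0) :
    spectrum ℂ (g * (Matrix.diagonal l + v) * g⁻¹) ⊆ Set.range l := by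
  intro z hz
  rw [Matrix.mem_spectrum_iff_isRoot_charpoly, aux_charpoly g hg l v hv, Polynomial.IsRoot,
    Polynomial.eval_prod, Finset.prod_eq_zero_iff] at hz
  obtain ⟨i, _, h⟩ := hz
  refine ⟨i, ?_⟩
  simp only [Polynomial.eval_sub, Polynomial.eval_X, Polynomial.eval_C, sub_eq_zero] at h
  exact h.symm

lemma aux_perm {n : ℕ} (σ : Equiv.Perm (Fin n)) (l : Fin n → ℂ) (hu : IsUnit (σ.permMatrix ℂ)) :
    σ.permMatrix ℂ * Matrix.diagonal l * (σ.permMatrix ℂ)⁻¹ = Matrix.diagonal (l ∘ σ) := by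
  have h : σ.permMatrix ℂ * Matrix.diagonal l = Matrix.diagonal (l ∘ σ) * σ.permMatrix ℂ := by
    ext i j
    simp [Equiv.Perm.permMatrix, PEquiv.toMatrix_apply, Matrix.mul_diagonal,
      Matrix.diagonal_mul, Equiv.toPEquiv_apply]
    split_ifs with h
    · rw [h]
    · rfl
  rw [h, Matrix.mul_assoc, Matrix.mul_nonsing_inv _ ((Matrix.isUnit_iff_isUnit_det _).1 hu),
    Matrix.mul_one]

/-- existence direction -/
lemma aux_block {n k : ℕ} :
    ∃ φ : Matrix (Fin n) (Fin n) ℂ → Matrix (Fin (n * k)) (Fin (n * k)) ℂ,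
      Continuous φ ∧ ∀ X, spectrum ℂ (φ X) ⊆ spectrum ℂ X := by
  refine ⟨fun X => Matrix.reindex finProdFinEquiv finProdFinEquiv
    (Matrix.blockDiagonal (fun _ : Fin k => X)), ?_, ?_⟩
  · refine Continuous.matrix_reindex ?_ _ _
    exact Continuous.matrix_blockDiagonal (continuous_pi fun _ => continuous_id)
  · intro X
    have h := AlgEquiv.spectrum_eq (Matrix.reindexAlgEquiv ℂ ℂ (finProdFinEquiv (m := n) (n := k)))
      (Matrix.blockDiagonal (fun _ : Fin k => X))
    rw [Matrix.reindexAlgEquiv_apply] at h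
    rw [h]
    intro z hz
    contrapose! hz
    rw [spectrum.notMem_iff] at hz ⊢
    have : algebraMap ℂ (Matrix (Fin n × Fin k) (Fin n × Fin k) ℂ) z
        - Matrix.blockDiagonal (fun _ : Fin k => X)
        = Matrix.blockDiagonalRingHom (Fin n) (Fin k) ℂ
          (fun _ : Fin k => algebraMap ℂ (Matrix (Fin n) (Fin n) ℂ) z - X) := by
      ext ⟨i, a⟩ ⟨j, b⟩
      simp only [Matrix.blockDiagonalRingHom_apply, Matrix.sub_apply,
        Matrix.algebraMap_matrix_apply, Matrix.blockDiagonal_apply, Prod.mk.injEq]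
      split_ifs <;> simp_all
    rw [this]
    exact IsUnit.map _ (Pi.isUnit_iff.2 fun _ => hz)

/-- Let `G ≤ GL(n)` be a closed connected subgroup, `V` a linear subspace of
the strictly upper-triangular matrices, and `L ⊆ ℂⁿ` a nonempty subset such that `L ∖ Δ_L`
is dense in `L` and the isotropy group in `G ∩ Sₙ` of each connected component of `L ∖ Δ_L`
acts transitively on `{1,…,n}`.  Then a continuous spectrum-shrinking map
`φ : Ad_G T_{L,V} → M_m` exists iff `n ∣ m`, and in that case every such `φ` satisfies
`k_{φ(X)} = (k_X)^(m/n)`. -/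
theorem spectrum_shrinker_of_adjoint_orbit_triangular
    (n m : ℕ) (hn : 1 ≤ n) (hm : 1 ≤ m)
    -- `G`: a closed connected subgroup of `GL(n)`
    (G : Set (Matrix (Fin n) (Fin n) ℂ))
    (hGunit : ∀ g ∈ G, IsUnit g)
    (hGone : (1 : Matrix (Fin n) (Fin n) ℂ) ∈ G)
    (hGmul : ∀ g ∈ G, ∀ h ∈ G, g * h ∈ G)
    (hGinv : ∀ g ∈ G, g⁻¹ ∈ G)
    (hGclosed : IsClosed (Subtype.val ⁻¹' G :
      Set {X : Matrix (Fin n) (Fin n) ℂ // IsUnit X}))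
    (hGconn : IsConnected G)
    -- `V`: a subspace of the strictly upper-triangular matrices
    (V : Submodule ℂ (Matrix (Fin n) (Fin n) ℂ))
    (hV : ∀ v ∈ V, ∀ i j : Fin n, j ≤ i → v i j = 0)
    -- `L ⊆ ℂⁿ` nonempty, with `L'` denoting `L ∖ Δ_L`
    (L : Set (Fin n → ℂ)) (hLne : L.Nonempty)
    (L' : Set (Fin n → ℂ))
    (hL' : L' = L \ {x ∈ L | ∃ j k : Fin n, j ≠ k ∧ x j = x k})
    -- (i) `L ∖ Δ_L` is dense in `L`
    (hdense : L ⊆ closure L')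
    -- (ii) the isotropy group in `G ∩ Sₙ` of each connected component of `L ∖ Δ_L`
    -- acts transitively on `{1,…,n}`
    (htrans : ∀ x ∈ L', ∀ i j : Fin n, ∃ σ : Equiv.Perm (Fin n),
        σ.permMatrix ℂ ∈ G ∧
        (fun y : Fin n → ℂ => fun k => y (σ⁻¹ k)) '' connectedComponentIn L' x
          = connectedComponentIn L' x ∧
        σ i = j)
    -- the domain `Ad_G T_{L,V}`
    (D : Set (Matrix (Fin n) (Fin n) ℂ))
    (hD : D = {Y | ∃ g ∈ G, ∃ lam ∈ L, ∃ v ∈ V,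
        Y = g * (Matrix.diagonal lam + v) * g⁻¹}) :
    ((∃ φ : {Y : Matrix (Fin n) (Fin n) ℂ // Y ∈ D} → Matrix (Fin m) (Fin m) ℂ,
        Continuous φ ∧ ∀ X, spectrum ℂ (φ X) ⊆ spectrum ℂ X.val) ↔ n ∣ m) ∧
    (n ∣ m → ∀ φ : {Y : Matrix (Fin n) (Fin n) ℂ // Y ∈ D} → Matrix (Fin m) (Fin m) ℂ,
        Continuous φ → (∀ X, spectrum ℂ (φ X) ⊆ spectrum ℂ X.val) →
        ∀ X, (φ X).charpoly = X.val.charpoly ^ (m / n)) := by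
  have hLL : L' ⊆ L := by
    rw [hL']; exact Set.sdiff_subset
  have hinj : ∀ x ∈ L', Function.Injective x := by
    intro x hx i j hij
    by_contra hne
    rw [hL'] at hx
    exact hx.2 ⟨hx.1, i, j, hne, hij⟩
  -- the parametrization of the domain
  have hmem : ∀ t : G × L × V, t.1.1 * (Matrix.diagonal t.2.1.1 + t.2.2.1) * t.1.1⁻¹ ∈ D := by
    rintro ⟨⟨g, hg⟩, ⟨l, hl⟩, ⟨v, hv⟩⟩
    rw [hD]
    exact ⟨g, hg, l, hl, v, hv, rfl⟩
  let Φ : G × L × V → {Y : Matrix (Fin n) (Fin n) ℂ // Y ∈ D} := fun t => ⟨_, hmem t⟩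
  have hΦ : Continuous Φ := by
    refine Continuous.subtype_mk ?_ _
    have hg : Continuous fun t : G × L × V => t.1.1 := by fun_prop
    have hi : Continuous fun t : G × L × V => t.1.1⁻¹ := by
      simp only [Matrix.inv_def, Ring.inverse_eq_inv']
      refine Continuous.smul (Continuous.inv₀ hg.matrix_det ?_) hg.matrix_adjugate
      intro t
      exact ((Matrix.isUnit_iff_isUnit_det _).1 (hGunit _ t.1.2)).ne_zero
    have hl : Continuous fun t : G × L × V => t.2.1.1 := by fun_prop
    have hv : Continuous fun t : G × L × V => t.2.2.1 := by fun_prop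
    exact (hg.mul (hl.matrix_diagonal.add hv)).mul hi
  have key : ∀ φ : {Y : Matrix (Fin n) (Fin n) ℂ // Y ∈ D} → Matrix (Fin m) (Fin m) ℂ,
      Continuous φ → (∀ X, spectrum ℂ (φ X) ⊆ spectrum ℂ X.val) →
      ∀ x ∈ L', ∃ k : ℕ, m = n * k ∧ ∀ g : G, ∀ v : V, ∀ hx : x ∈ L,
        (φ (Φ (g, ⟨x, hx⟩, v))).charpoly = ∏ i, (Polynomial.X - Polynomial.C (x i)) ^ k := by
    intro φ hφ hsp x hx
    let C := connectedComponentIn L' x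
    have hCL : C ⊆ L' := connectedComponentIn_subset L' x
    have hxC : x ∈ C := mem_connectedComponentIn hx
    have : PreconnectedSpace G := Subtype.preconnectedSpace hGconn.isPreconnected
    have : PreconnectedSpace C := Subtype.preconnectedSpace isPreconnected_connectedComponentIn
    have : PreconnectedSpace V :=
      Subtype.preconnectedSpace (s := (V : Set (Matrix (Fin n) (Fin n) ℂ)))
        ((V.restrictScalars ℝ).convex.isPreconnected)
    have : Nonempty G := ⟨⟨1, hGone⟩⟩
    have : Nonempty C := ⟨⟨x, hxC⟩⟩
    let ι : G × C × V → G × L × V := fun t => (t.1, ⟨t.2.1.1, hLL (hCL t.2.1.2)⟩, t.2.2)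
    have hι : Continuous ι := by
      refine continuous_fst.prodMk (Continuous.prodMk (Continuous.subtype_mk ?_ _) ?_) <;> fun_prop
    obtain ⟨f, hf⟩ := aux_const (T := G × C × V) (fun t => t.2.1.1) (by fun_prop)
      (fun t => hinj _ (hCL t.2.1.2)) (fun t => φ (Φ (ι t))) (hφ.comp (hΦ.comp hι))
      (fun t => (hsp _).trans
        (aux_spectrum _ (hGunit _ t.1.2) _ _ (hV _ t.2.2.2)))
    have hperm : ∀ i j, f i = f j := by
      intro i j
      obtain ⟨σ, hσG, hσC, hσ⟩ := htrans x hx i j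
      have hy : x ∘ σ ∈ C := by
        have h1 : x ∈ (fun y : Fin n → ℂ => fun k => y (σ⁻¹ k)) '' C := by
          rw [hσC]; exact hxC
        obtain ⟨y, hy, hyx⟩ := h1
        have : x ∘ σ = y := by
          rw [← hyx]; funext k; simp
        rwa [this]
      have h1 := hf (⟨_, hσG⟩, ⟨x, hxC⟩, 0)
      have h2 := hf (⟨1, hGone⟩, ⟨x ∘ σ, hy⟩, 0)
      have h3 : Φ (ι (⟨_, hσG⟩, ⟨x, hxC⟩, 0)) = Φ (ι (⟨1, hGone⟩, ⟨x ∘ σ, hy⟩, 0)) := by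
        apply Subtype.ext
        simp only [Φ, ι, ZeroMemClass.coe_zero, add_zero]
        rw [aux_perm σ x (hGunit _ hσG)]
        simp
      simp only [h3] at h1
      have h4 := h1.symm.trans h2
      have h5 := aux_count (x ∘ σ) (hinj _ (hCL hy)) f i
      have h6 := aux_count x (hinj _ hx) f j
      simp only at h4
      rw [← h4] at h5
      rw [← h5, ← h6]
      simp [hσ]
    have hk : ∀ i, f i = f ⟨0, hn⟩ := fun i => hperm _ _
    refine ⟨f ⟨0, hn⟩, ?_, ?_⟩
    · have h1 := congrArg Polynomial.natDegree (hf (⟨1, hGone⟩, ⟨x, hxC⟩, 0))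
      rw [Matrix.charpoly_natDegree_eq_dim, Fintype.card_fin, Polynomial.natDegree_prod] at h1
      · simpa [Polynomial.natDegree_pow, hk] using h1
      · exact fun i _ => pow_ne_zero _ (Polynomial.X_sub_C_ne_zero _)
    · intro g v hxL
      have h1 := hf (g, ⟨x, hxC⟩, v)
      simp only [hk] at h1
      exact h1
  have hne : L'.Nonempty := by
    obtain ⟨x, hx⟩ := hLne
    exact closure_nonempty_iff.1 ⟨x, hdense hx⟩
  refine ⟨⟨?_, ?_⟩, ?_⟩
  · rintro ⟨φ, hφ, hsp⟩
    obtain ⟨x, hx⟩ := hne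
    obtain ⟨k, hk, _⟩ := key φ hφ hsp x hx
    exact ⟨k, hk⟩
  · rintro ⟨k, rfl⟩
    obtain ⟨ψ, hψ, hs⟩ := aux_block (n := n) (k := k)
    exact ⟨fun X => ψ X.1, hψ.comp continuous_subtype_val, fun X => hs X.1⟩
  · rintro - φ hφ hsp ⟨X, hX⟩
    have hX' := hX
    rw [hD] at hX'
    obtain ⟨g, hg, l, hl, v, hv, rfl⟩ := hX'
    have hclosed := aux_eval_charpoly_closed (T := L) (fun t => t.1) continuous_subtype_val
      (fun t => φ (Φ (⟨g, hg⟩, t, ⟨v, hv⟩))) (hφ.comp (hΦ.comp (by fun_prop)))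
      (fun _ => m / n)
    have hsub : (Subtype.val ⁻¹' L' : Set L) ⊆ {t : L | (φ (Φ (⟨g, hg⟩, t, ⟨v, hv⟩))).charpoly =
      ∏ i, (Polynomial.X - Polynomial.C (t.1 i)) ^ (m / n)} := by
      rintro ⟨t, ht⟩ htL
      obtain ⟨k, hk, h⟩ := key φ hφ hsp t htL
      have : m / n = k := by rw [hk]; exact Nat.mul_div_cancel_left _ hn
      rw [Set.mem_ofPred_eq, this]
      exact h _ _ ht
    have hmem2 : (⟨l, hl⟩ : L) ∈ closure (Subtype.val ⁻¹' L' : Set L) := by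
      rw [closure_subtype, Subtype.image_preimage_coe, Set.inter_eq_right.2 hLL]
      exact hdense hl
    have hfin := closure_minimal hsub hclosed hmem2
    rw [Set.mem_ofPred_eq, Finset.prod_pow] at hfin
    rw [aux_charpoly g (hGunit g hg) l v (hV v hv)]
    exact hfin
end

section
/- Let m, n ≥ 1 be integers. There exists a continuous spectrum-shrinking map φ : M_n → M_m if and only if n divides m; and when n divides m, every continuous spectrum-shrinking map φ : M_n → M_m satisfies k_{φ(X)} = (k_X)^{m/n} for all X ∈ M_n (in particular, sp(φ(X)) = sp(X) for all X). -/
open Matrix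

lemma charpoly_eq_prod_aux {n m : ℕ} (M : Matrix (Fin m) (Fin m) ℂ) (z : Fin n → ℂ)
    (hz : Function.Injective z) (h : spectrum ℂ M ⊆ Set.range z) :
    M.charpoly = ∏ i, (Polynomial.X - Polynomial.C (z i)) ^ (M.charpoly.rootMultiplicity (z i)) := by
  classical
  have hs : M.charpoly.Splits := IsAlgClosed.splits _
  have h1 := hs.eq_prod_roots_of_monic M.charpoly_monic
  have h2 : M.charpoly.roots.toFinset ⊆ Finset.univ.image z := by
    intro x hx
    have hx' : x ∈ M.charpoly.roots := by simpa only [Multiset.mem_toFinset] using hx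
    have : x ∈ spectrum ℂ M :=
      Matrix.mem_spectrum_iff_isRoot_charpoly.2 (Polynomial.isRoot_of_mem_roots hx')
    obtain ⟨i, hi⟩ := h this
    simp [← hi]
  conv_lhs => rw [h1]
  rw [Finset.prod_multiset_map_count, Finset.prod_subset h2, Finset.prod_image (hz.injOn)]
  · simp only [Polynomial.count_roots]
  · intro x _ hx
    rw [Multiset.mem_toFinset] at hx
    rw [Multiset.count_eq_zero_of_notMem hx, pow_zero]

lemma rootMult_prod_aux {n : ℕ} (z : Fin n → ℂ) (hz : Function.Injective z) (k : Fin n → ℕ)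
    (i : Fin n) :
    (∏ j, (Polynomial.X - Polynomial.C (z j)) ^ (k j)).rootMultiplicity (z i) = k i := by
  classical
  have hne : (∏ j, (Polynomial.X - Polynomial.C (z j)) ^ (k j)) ≠ 0 :=
    Finset.prod_ne_zero_iff.2 fun j _ => pow_ne_zero _ (Polynomial.X_sub_C_ne_zero _)
  rw [← Polynomial.count_roots, Polynomial.roots_prod _ _ hne]
  simp only [Polynomial.roots_pow, Polynomial.roots_X_sub_C, Multiset.count_bind,
    Multiset.count_nsmul, Multiset.count_singleton, hz.eq_iff]
  change (∑ b : Fin n, _) = _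
  simp

lemma mult_const_aux {n m : ℕ} {T : Type*} [TopologicalSpace T] [PreconnectedSpace T]
    (A : T → Matrix (Fin m) (Fin m) ℂ) (hA : Continuous A) (z : T → Fin n → ℂ) (hz : Continuous z)
    (hinj : ∀ t, Function.Injective (z t)) (hs : ∀ t, spectrum ℂ (A t) ⊆ Set.range (z t))
    (s t : T) (i : Fin n) :
    (A s).charpoly.rootMultiplicity (z s i) = (A t).charpoly.rootMultiplicity (z t i) := by
  classical
  let g : T → Fin n → ℕ := fun t i => (A t).charpoly.rootMultiplicity (z t i)
  have hb : ∀ t i, g t i < m + 1 := by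
    intro t i
    have : (A t).charpoly.rootMultiplicity (z t i) ≤ (A t).charpoly.natDegree := by
      rw [← Polynomial.count_roots]
      exact (Multiset.count_le_card _ _).trans (Polynomial.card_roots' _)
    rw [Matrix.charpoly_natDegree_eq_dim, Fintype.card_fin] at this
    exact Nat.lt_succ_of_le this
  let f : T → Fin n → Fin (m + 1) := fun t i => ⟨g t i, hb t i⟩
  have hcl : ∀ k : Fin n → Fin (m + 1), IsClosed (f ⁻¹' {k}) := by
    intro k
    have : f ⁻¹' {k} = ⋂ x : ℂ, {t | (Matrix.scalar (Fin m) x - A t).det =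
        ∏ i, (x - z t i) ^ ((k i : ℕ))} := by
      ext t
      simp only [Set.mem_preimage, Set.mem_singleton_iff, Set.mem_iInter, Set.mem_ofPred_eq]
      constructor
      · intro h x
        rw [← Matrix.eval_charpoly, charpoly_eq_prod_aux (A t) (z t) (hinj t) (hs t),
          Polynomial.eval_prod]
        refine Finset.prod_congr rfl fun i _ => ?_
        rw [← h]
        simp [f, g]
      · intro h
        have hp : (A t).charpoly = ∏ j, (Polynomial.X - Polynomial.C (z t j)) ^ ((k j : ℕ)) := by
          apply Polynomial.funext
          intro x
          rw [Matrix.eval_charpoly, h, Polynomial.eval_prod]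
          simp
        funext i
        apply Fin.ext
        change (A t).charpoly.rootMultiplicity (z t i) = _
        rw [hp, rootMult_prod_aux (z t) (hinj t)]
    rw [this]
    refine isClosed_iInter fun x => isClosed_eq ?_ ?_
    · exact (continuous_const.sub hA).matrix_det
    · fun_prop
  have hf : Continuous f := by
    rw [continuous_iff_isClosed]
    intro S _
    rw [← Set.biUnion_preimage_singleton]
    exact S.toFinite.isClosed_biUnion fun k _ => hcl k
  have := congrFun (PreconnectedSpace.constant inferInstance hf (x := s) (y := t)) i
  exact congrArg Fin.val this

lemma compl_roots_preconn (q : Polynomial ℂ) (hq : q ≠ 0) :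
    PreconnectedSpace {t : ℂ // q.eval t ≠ 0} := by
  have hfin : {t : ℂ | q.eval t = 0}.Finite := Polynomial.finite_setOfPred_isRoot hq
  have := hfin.countable.isPathConnected_compl_of_one_lt_rank (by
    rw [Complex.rank_real_complex]; norm_num)
  exact isPreconnected_iff_preconnectedSpace.mp this.isConnected.isPreconnected

lemma charpoly_conj_aux {n : ℕ} (z : Fin n → ℂ) (S : Matrix (Fin n) (Fin n) ℂ) (hS : S.det ≠ 0) :
    (S * diagonal z * S⁻¹).charpoly = ∏ i, (Polynomial.X - Polynomial.C (z i)) := by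
  have hu : IsUnit S := (Matrix.isUnit_iff_isUnit_det S).2 hS.isUnit
  obtain ⟨u, rfl⟩ := hu
  rw [Matrix.charpoly_units_conj, Matrix.charpoly_diagonal]

lemma spectrum_conj_aux {n : ℕ} (z : Fin n → ℂ) (S : Matrix (Fin n) (Fin n) ℂ) (hS : S.det ≠ 0) :
    spectrum ℂ (S * diagonal z * S⁻¹) ⊆ Set.range z := by
  intro x hx
  rw [Matrix.mem_spectrum_iff_isRoot_charpoly, charpoly_conj_aux z S hS, Polynomial.IsRoot.def,
    Polynomial.eval_prod, Finset.prod_eq_zero_iff] at hx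
  obtain ⟨i, -, hi⟩ := hx
  refine ⟨i, ?_⟩
  simp only [Polynomial.eval_sub, Polynomial.eval_X, Polynomial.eval_C] at hi
  exact (sub_eq_zero.1 hi).symm

lemma mult_eq_aux {n m : ℕ} (φ : Matrix (Fin n) (Fin n) ℂ → Matrix (Fin m) (Fin m) ℂ)
    (hφ : Continuous φ) (hs : ∀ X, spectrum ℂ (φ X) ⊆ spectrum ℂ X)
    (z w : Fin n → ℂ) (hz : Function.Injective z) (hw : Function.Injective w)
    (S T : Matrix (Fin n) (Fin n) ℂ) (hS : S.det ≠ 0) (hT : T.det ≠ 0) (i : Fin n) :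
    (φ (S * diagonal z * S⁻¹)).charpoly.rootMultiplicity (z i) =
      (φ (T * diagonal w * T⁻¹)).charpoly.rootMultiplicity (w i) := by
  classical
  let q1 : Polynomial ℂ := ∏ p ∈ (Finset.univ : Finset (Fin n × Fin n)).filter (fun p => p.1 ≠ p.2),
    (Polynomial.C (z p.1 - z p.2) +
      Polynomial.X * Polynomial.C ((w p.1 - z p.1) - (w p.2 - z p.2)))
  let N : Matrix (Fin n) (Fin n) (Polynomial ℂ) :=
    Matrix.of fun a b => Polynomial.C (S a b) + Polynomial.X * Polynomial.C (T a b - S a b)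
  let zt : ℂ → Fin n → ℂ := fun t j => z j + t * (w j - z j)
  let St : ℂ → Matrix (Fin n) (Fin n) ℂ := fun t => Matrix.of fun a b => S a b + t * (T a b - S a b)
  have hN : ∀ t, N.det.eval t = (St t).det := by
    intro t
    rw [← Polynomial.coe_evalRingHom, RingHom.map_det]
    congr 1
    ext a b
    simp [N, St]
  have hq1 : ∀ t, q1.eval t ≠ 0 ↔ Function.Injective (zt t) := by
    intro t
    simp only [q1, Polynomial.eval_prod, Finset.prod_ne_zero_iff]
    constructor
    · intro h a b hab
      by_contra hne
      apply h (a, b) (by simp [hne])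
      simp only [Polynomial.eval_add, Polynomial.eval_C, Polynomial.eval_mul, Polynomial.eval_X]
      simp only [zt] at hab
      linear_combination hab
    · rintro h ⟨a, b⟩ hab h0
      simp only [Finset.mem_filter, Finset.mem_univ, true_and] at hab
      apply hab
      apply h
      simp only [Polynomial.eval_add, Polynomial.eval_C, Polynomial.eval_mul,
        Polynomial.eval_X] at h0
      simp only [zt]
      linear_combination h0
  have hz0 : zt 0 = z := by funext j; simp [zt]
  have hz1 : zt 1 = w := by funext j; simp [zt]
  have hS0 : St 0 = S := by ext; simp [St]
  have hS1 : St 1 = T := by ext; simp [St]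
  let q := q1 * N.det
  have hq : ∀ t, q.eval t ≠ 0 ↔ Function.Injective (zt t) ∧ (St t).det ≠ 0 := by
    intro t
    rw [← hq1, ← hN, ← mul_ne_zero_iff, ← Polynomial.eval_mul]
  have h0 : q.eval 0 ≠ 0 := (hq 0).2 (by rw [hz0, hS0]; exact ⟨hz, hS⟩)
  have h1 : q.eval 1 ≠ 0 := (hq 1).2 (by rw [hz1, hS1]; exact ⟨hw, hT⟩)
  have hqne : q ≠ 0 := by
    intro h
    rw [h] at h0
    simp at h0
  have := compl_roots_preconn q hqne
  have hStc : Continuous fun t : {t : ℂ // q.eval t ≠ 0} => St t := by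
    refine continuous_matrix fun a b => ?_
    simp only [St, Matrix.of_apply]
    fun_prop
  have hztc : Continuous fun t : {t : ℂ // q.eval t ≠ 0} => zt t := by
    simp only [zt]
    fun_prop
  have hAc : Continuous fun t : {t : ℂ // q.eval t ≠ 0} =>
      φ (St t * diagonal (zt t) * (St t)⁻¹) := by
    refine hφ.comp ?_
    refine (hStc.mul hztc.matrix_diagonal).mul ?_
    simp only [Matrix.inv_def, Ring.inverse_eq_inv']
    exact (hStc.matrix_det.inv₀ fun t => ((hq t).1 t.2).2).smul hStc.matrix_adjugate
  have key := mult_const_aux (fun t : {t : ℂ // q.eval t ≠ 0} =>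
      φ (St t * diagonal (zt t) * (St t)⁻¹)) hAc (fun t => zt t) hztc
      (fun t => ((hq t).1 t.2).1)
      (fun t => (hs _).trans (spectrum_conj_aux _ _ ((hq t).1 t.2).2)) ⟨0, h0⟩ ⟨1, h1⟩ i
  simpa only [hz0, hz1, hS0, hS1] using key

lemma mult_swap_aux {n m : ℕ} (φ : Matrix (Fin n) (Fin n) ℂ → Matrix (Fin m) (Fin m) ℂ)
    (hφ : Continuous φ) (hs : ∀ X, spectrum ℂ (φ X) ⊆ spectrum ℂ X)
    (z : Fin n → ℂ) (hz : Function.Injective z)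
    (S : Matrix (Fin n) (Fin n) ℂ) (hS : S.det ≠ 0) (i j : Fin n) :
    (φ (S * diagonal z * S⁻¹)).charpoly.rootMultiplicity (z i) =
      (φ (S * diagonal z * S⁻¹)).charpoly.rootMultiplicity (z j) := by
  let σ : Equiv.Perm (Fin n) := Equiv.swap i j
  let S' := S.submatrix (Equiv.refl (Fin n)) σ
  have hS' : S'.det ≠ 0 := by
    have : IsUnit S' := (Matrix.isUnit_submatrix_equiv (Equiv.refl (Fin n)) σ).2
      ((Matrix.isUnit_iff_isUnit_det S).2 hS.isUnit)
    exact ((Matrix.isUnit_iff_isUnit_det S').1 this).ne_zero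
  have heq : S' * diagonal (z ∘ σ) * S'⁻¹ = S * diagonal z * S⁻¹ := by
    simp only [S']
    rw [Matrix.inv_submatrix_equiv, ← Matrix.submatrix_diagonal_equiv,
      Matrix.submatrix_mul_equiv, Matrix.submatrix_mul_equiv]
    rfl
  have := mult_eq_aux φ hφ hs z (z ∘ σ) hz (hz.comp σ.injective) S S' hS hS' i
  rw [heq] at this
  simpa [σ] using this

/-- A matrix with separable characteristic polynomial is diagonalizable. -/
lemma diag_aux {n : ℕ} (X : Matrix (Fin n) (Fin n) ℂ) (h : X.charpoly.Separable) :
    ∃ (z : Fin n → ℂ) (S : Matrix (Fin n) (Fin n) ℂ), Function.Injective z ∧ S.det ≠ 0 ∧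
      X = S * diagonal z * S⁻¹ := by
  classical
  have hnd := Polynomial.nodup_roots h
  have hcard : X.charpoly.roots.toFinset.card = n := by
    rw [Multiset.toFinset_card_of_nodup hnd]
    have := (IsAlgClosed.splits X.charpoly).natDegree_eq_card_roots
    rw [← this, Matrix.charpoly_natDegree_eq_dim, Fintype.card_fin]
  let e := (X.charpoly.roots.toFinset.equivFinOfCardEq hcard).symm
  let z : Fin n → ℂ := fun i => (e i : ℂ)
  have hz : Function.Injective z := Subtype.val_injective.comp e.injective
  have hev : ∀ i, ∃ v, Module.End.HasEigenvector (toLin' X) (z i) v := by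
    intro i
    apply Module.End.HasEigenvalue.exists_hasEigenvector
    rw [Module.End.hasEigenvalue_iff_mem_spectrum, Matrix.spectrum_toLin',
      Matrix.mem_spectrum_iff_isRoot_charpoly]
    have := (e i).2
    rw [Multiset.mem_toFinset] at this
    exact Polynomial.isRoot_of_mem_roots this
  choose v hv using hev
  have hli := Module.End.eigenvectors_linearIndependent' (toLin' X) z hz v hv
  let S : Matrix (Fin n) (Fin n) ℂ := Matrix.of fun a b => v b a
  have hSu : IsUnit S := Matrix.linearIndependent_cols_iff_isUnit.1 hli
  have hSd : IsUnit S.det := (Matrix.isUnit_iff_isUnit_det S).1 hSu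
  refine ⟨z, S, hz, hSd.ne_zero, ?_⟩
  have hXS : X * S = S * diagonal z := by
    ext a b
    have := congrFun (hv b).apply_eq_smul a
    rw [Matrix.mul_diagonal]
    simp only [toLin'_apply, Pi.smul_apply, smul_eq_mul] at this
    rw [Matrix.mul_apply]
    simp only [S, Matrix.of_apply]
    rw [mul_comm, ← this]
    rfl
  rw [← hXS, Matrix.mul_nonsing_inv_cancel_right _ _ hSd]

lemma separable_case_aux {n m : ℕ} (hn : 1 ≤ n)
    (φ : Matrix (Fin n) (Fin n) ℂ → Matrix (Fin m) (Fin m) ℂ)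
    (hφ : Continuous φ) (hs : ∀ X, spectrum ℂ (φ X) ⊆ spectrum ℂ X)
    (X : Matrix (Fin n) (Fin n) ℂ) (h : X.charpoly.Separable) :
    n ∣ m ∧ (φ X).charpoly = X.charpoly ^ (m / n) := by
  obtain ⟨z, S, hz, hS, rfl⟩ := diag_aux X h
  have h1 := charpoly_eq_prod_aux _ z hz ((hs _).trans (spectrum_conj_aux z S hS))
  set k := (φ (S * diagonal z * S⁻¹)).charpoly.rootMultiplicity (z ⟨0, hn⟩) with hk
  simp only [mult_swap_aux φ hφ hs z hz S hS _ ⟨0, hn⟩, ← hk] at h1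
  rw [Finset.prod_pow, ← charpoly_conj_aux z S hS] at h1
  have hd := congrArg Polynomial.natDegree h1
  rw [Polynomial.natDegree_pow] at hd
  simp only [Matrix.charpoly_natDegree_eq_dim, Fintype.card_fin] at hd
  have hkm : m / n = k := by rw [hd]; exact Nat.mul_div_cancel _ hn
  exact ⟨⟨k, by rw [hd, mul_comm]⟩, by rw [hkm]; exact h1⟩

/-- Density along a line of matrices with separable characteristic polynomial. -/
lemma dense_sep_aux {n : ℕ} (X Y : Matrix (Fin n) (Fin n) ℂ)
    (hY : Y.charpoly.Separable) :
    Dense {t : ℂ | (X + t • (Y - X)).charpoly.Separable} := by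
  let N : Matrix (Fin n) (Fin n) (Polynomial ℂ) :=
    Matrix.of fun a b => Polynomial.C (X a b) + Polynomial.X * Polynomial.C (Y a b - X a b)
  have hN : ∀ t, N.map (Polynomial.evalRingHom t) = X + t • (Y - X) := by
    intro t
    ext a b
    simp [N]
  let r : Polynomial ℂ := Polynomial.resultant N.charpoly (Polynomial.derivative N.charpoly) n (n - 1)
  have hr : ∀ t, r.eval t ≠ 0 ↔ (X + t • (Y - X)).charpoly.Separable := by
    intro t
    have hdeg : (X + t • (Y - X)).charpoly.natDegree = n := by
      rw [Matrix.charpoly_natDegree_eq_dim, Fintype.card_fin]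
    have hdeg' : (Polynomial.derivative (X + t • (Y - X)).charpoly).natDegree = n - 1 := by
      rw [Polynomial.natDegree_derivative, hdeg]
    have : r.eval t = Polynomial.resultant (X + t • (Y - X)).charpoly
        (Polynomial.derivative (X + t • (Y - X)).charpoly) := by
      rw [hdeg, hdeg', ← hN, Matrix.charpoly_map, Polynomial.derivative_map,
        Polynomial.resultant_map_map]
      rfl
    rw [this, Ne, Polynomial.resultant_eq_zero_iff, Polynomial.separable_def]
    simp [(Matrix.charpoly_monic (X + t • (Y - X))).ne_zero]
  have hr1 : r.eval 1 ≠ 0 := by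
    rw [hr]
    simpa using hY
  have hrne : r ≠ 0 := by
    intro h
    rw [h] at hr1
    simp at hr1
  have hfin : {t : ℂ | r.eval t = 0}.Finite := Polynomial.finite_setOfPred_isRoot hrne
  convert hfin.countable.dense_compl ℂ using 1
  ext t
  exact (hr t).symm

theorem main_aux {n m : ℕ} (hn : 1 ≤ n)
    (φ : Matrix (Fin n) (Fin n) ℂ → Matrix (Fin m) (Fin m) ℂ)
    (hφ : Continuous φ) (hs : ∀ X, spectrum ℂ (φ X) ⊆ spectrum ℂ X) :
    n ∣ m ∧ ∀ X, (φ X).charpoly = X.charpoly ^ (m / n) := by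
  let D : Matrix (Fin n) (Fin n) ℂ := diagonal fun i => ((i : ℕ) : ℂ)
  have hD : D.charpoly.Separable := by
    rw [Matrix.charpoly_diagonal, Polynomial.separable_prod_X_sub_C_iff]
    intro a b hab
    exact Fin.ext (Nat.cast_injective (R := ℂ) hab)
  refine ⟨(separable_case_aux hn φ hφ hs D hD).1, fun X => ?_⟩
  apply Polynomial.funext
  intro x
  have hc : Continuous fun t : ℂ => X + t • (D - X) := by fun_prop
  have key := Continuous.ext_on (dense_sep_aux X D hD)
    (f := fun t : ℂ => (Matrix.scalar (Fin m) x - φ (X + t • (D - X))).det)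
    (g := fun t : ℂ => (Matrix.scalar (Fin n) x - (X + t • (D - X))).det ^ (m / n))
    (continuous_const.sub (hφ.comp hc)).matrix_det
    ((continuous_const.sub hc).matrix_det.pow _) (by
      intro t ht
      have := (separable_case_aux hn φ hφ hs _ ht).2
      simp only [← Matrix.eval_charpoly]
      rw [this, Polynomial.eval_pow])
  have := congrFun key 0
  simp only [zero_smul, add_zero] at this
  rw [Matrix.eval_charpoly, this, Polynomial.eval_pow, Matrix.eval_charpoly]

lemma exists_aux (n k : ℕ) :
    ∃ φ : Matrix (Fin n) (Fin n) ℂ → Matrix (Fin (n * k)) (Fin (n * k)) ℂ,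
        Continuous φ ∧ ∀ X, spectrum ℂ (φ X) ⊆ spectrum ℂ X := by
  let e : Fin n × Fin k ≃ Fin (n * k) := finProdFinEquiv
  refine ⟨fun X => reindexAlgEquiv ℂ ℂ e (blockDiagonal fun _ : Fin k => X), ?_, ?_⟩
  · have : Continuous fun X : Matrix (Fin n) (Fin n) ℂ => (blockDiagonal fun _ : Fin k => X) :=
      Continuous.matrix_blockDiagonal (continuous_pi fun _ => continuous_id)
    exact this.matrix_reindex e e
  · intro X
    rw [AlgEquiv.spectrum_eq]
    intro x hx
    rw [spectrum.mem_iff] at hx ⊢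
    intro hu
    apply hx
    have := (hu.map (Pi.constRingHom (Fin k) (Matrix (Fin n) (Fin n) ℂ))).map
      (blockDiagonalRingHom (Fin n) (Fin k) ℂ)
    convert this using 1
    rw [map_sub, map_sub]
    congr 1
    ext ⟨a, b⟩ ⟨c, d⟩
    simp [blockDiagonal_apply, Matrix.algebraMap_matrix_apply, Prod.ext_iff]
    grind

/-- For integers `m, n ≥ 1`, there exists a continuous spectrum-shrinking
map `φ : M_n → M_m` iff `n ∣ m`; and when `n ∣ m`, every continuous spectrum-shrinking
`φ : M_n → M_m` satisfies `k_{φ(X)} = (k_X)^(m/n)` (in particular it preserves spectra). -/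
theorem exists_continuous_spectrum_shrinker_Mn_iff (n m : ℕ) (hn : 1 ≤ n) (hm : 1 ≤ m) :
    ((∃ φ : Matrix (Fin n) (Fin n) ℂ → Matrix (Fin m) (Fin m) ℂ,
        Continuous φ ∧ ∀ X, spectrum ℂ (φ X) ⊆ spectrum ℂ X) ↔ n ∣ m) ∧
    (n ∣ m → ∀ φ : Matrix (Fin n) (Fin n) ℂ → Matrix (Fin m) (Fin m) ℂ,
        Continuous φ → (∀ X, spectrum ℂ (φ X) ⊆ spectrum ℂ X) →
        ∀ X, (φ X).charpoly = X.charpoly ^ (m / n) ∧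
          spectrum ℂ (φ X) = spectrum ℂ X) := by
  refine ⟨⟨?_, ?_⟩, ?_⟩
  · rintro ⟨φ, hφ, hs⟩
    exact (main_aux hn φ hφ hs).1
  · rintro ⟨k, rfl⟩
    exact exists_aux n k
  · intro hd φ hφ hs X
    have h := (main_aux hn φ hφ hs).2 X
    refine ⟨h, ?_⟩
    have hk : m / n ≠ 0 := (Nat.div_pos (Nat.le_of_dvd hm hd) hn).ne'
    ext x
    rw [Matrix.mem_spectrum_iff_isRoot_charpoly, Matrix.mem_spectrum_iff_isRoot_charpoly, h,
      Polynomial.IsRoot.def, Polynomial.IsRoot.def, Polynomial.eval_pow, pow_eq_zero_iff hk]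
end

section
/- Let m, n ≥ 1 be integers and let GL(n) denote the group of invertible n×n complex matrices, topologized as a subspace of M_n. There exists a continuous spectrum-shrinking map φ : GL(n) → M_m if and only if n divides m; and when n divides m, every continuous spectrum-shrinking map φ : GL(n) → M_m satisfies k_{φ(X)} = (k_X)^{m/n} for all X ∈ GL(n) (in particular, sp(φ(X)) = sp(X) for all X). -/
open Matrix

lemma aux_split {n m : ℕ} (B : Matrix (Fin m) (Fin m) ℂ) (d : Fin n → ℂ)
    (hd : Function.Injective d) (hs : spectrum ℂ B ⊆ Set.range d) :
    B.charpoly = ∏ i, (Polynomial.X - Polynomial.C (d i)) ^ (B.charpoly.rootMultiplicity (d i)) := by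
  classical
  have h1 := (IsAlgClosed.splits B.charpoly).eq_prod_roots
  rw [(Matrix.charpoly_monic B).leadingCoeff, map_one, one_mul,
    Polynomial.prod_multiset_root_eq_finset_root] at h1
  conv_lhs => rw [h1]
  rw [← Finset.prod_image (s := Finset.univ) (g := d)
    (f := fun a => (Polynomial.X - Polynomial.C a) ^ (B.charpoly.rootMultiplicity a)) hd.injOn]
  apply Finset.prod_subset
  · intro a ha
    rw [Multiset.mem_toFinset, Polynomial.mem_roots (Matrix.charpoly_monic B).ne_zero] at ha
    obtain ⟨i, rfl⟩ := hs (Matrix.mem_spectrum_iff_isRoot_charpoly.2 ha)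
    simp
  · intro a _ ha
    rw [Multiset.mem_toFinset, Polynomial.mem_roots (Matrix.charpoly_monic B).ne_zero] at ha
    rw [Polynomial.rootMultiplicity_eq_zero ha, pow_zero]

lemma aux_mult {n : ℕ} (d : Fin n → ℂ) (hd : Function.Injective d) (k : Fin n → ℕ) (i : Fin n) :
    (∏ i, (Polynomial.X - Polynomial.C (d i)) ^ k i).rootMultiplicity (d i) = k i := by
  classical
  rw [← Polynomial.count_roots, Polynomial.roots_prod]
  · simp only [Polynomial.roots_pow, Polynomial.roots_X_sub_C, Multiset.count_bind,
      Multiset.count_nsmul, Multiset.count_singleton]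
    change ∑ j, k j * (if d i = d j then 1 else 0) = k i
    simp [hd.eq_iff]
  · exact Finset.prod_ne_zero_iff.2 fun j _ => pow_ne_zero _ (Polynomial.X_sub_C_ne_zero _)

lemma aux_const_s2 {n m : ℕ} {Y : Type*} [TopologicalSpace Y] [PreconnectedSpace Y]
    (B : Y → Matrix (Fin m) (Fin m) ℂ) (hB : Continuous B) (d : Y → Fin n → ℂ)
    (hdc : Continuous d) (hd : ∀ y, Function.Injective (d y))
    (hs : ∀ y, spectrum ℂ (B y) ⊆ Set.range (d y)) (y w : Y) (i : Fin n) :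
    (B y).charpoly.rootMultiplicity (d y i) = (B w).charpoly.rootMultiplicity (d w i) := by
  classical
  have hle : ∀ y i, (B y).charpoly.rootMultiplicity (d y i) < m + 1 := by
    intro y i
    have := (Multiset.count_le_card (d y i) (B y).charpoly.roots).trans
      (Polynomial.card_roots' (B y).charpoly)
    rw [Polynomial.count_roots] at this
    rw [Matrix.charpoly_natDegree_eq_dim, Fintype.card_fin] at this
    omega
  let f : Y → (Fin n → Fin (m+1)) := fun y i => ⟨_, hle y i⟩
  have hf : Continuous f := by
    rw [continuous_iff_isClosed]
    intro s _
    have : f ⁻¹' s = ⋃ k ∈ s, f ⁻¹' {k} := by ext; simp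
    rw [this]
    refine (Set.toFinite s).isClosed_biUnion fun k _ => ?_
    have : f ⁻¹' {k} = ⋂ x : ℂ, {y | (x • (1 : Matrix (Fin m) (Fin m) ℂ) - B y).det
        = ∏ i, (x - d y i) ^ (k i : ℕ)} := by
      ext y
      have e : ∀ x : ℂ, (x • (1 : Matrix (Fin m) (Fin m) ℂ) - B y).det = (B y).charpoly.eval x := by
        intro x
        rw [Matrix.eval_charpoly, Matrix.scalar_apply, Matrix.smul_one_eq_diagonal]
      simp only [Set.mem_preimage, Set.mem_singleton_iff, Set.mem_iInter, Set.mem_ofPred_eq, e]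
      constructor
      · rintro rfl x
        conv_lhs => rw [aux_split (B y) (d y) (hd y) (hs y)]
        simp [Polynomial.eval_prod, f]
      · intro h
        have : (B y).charpoly = ∏ i, (Polynomial.X - Polynomial.C (d y i)) ^ (k i : ℕ) := by
          apply Polynomial.funext
          intro x
          rw [h x]
          simp [Polynomial.eval_prod]
        funext i
        apply Fin.ext
        simp only [f]
        rw [this]
        exact aux_mult (d y) (hd y) (fun i => (k i : ℕ)) i
    rw [this]
    refine isClosed_iInter fun x => isClosed_eq ?_ ?_
    · fun_prop
    · fun_prop
  have := PreconnectedSpace.constant ‹_› hf (x := y) (y := w)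
  simpa [f] using congrArg Fin.val (congrFun this i)

lemma aux_affine (a b : ℂ) (ha : a ≠ 0) : {z : ℂ | a + z * b = 0}.Finite := by
  apply Set.Subsingleton.finite
  intro z hz w hw
  simp only [Set.mem_ofPred_eq] at hz hw
  have hb : b ≠ 0 := by rintro rfl; simp at hz; exact ha hz
  exact mul_right_cancel₀ hb (by linear_combination hz - hw)

lemma aux_detfin {n : ℕ} (P Q : Matrix (Fin n) (Fin n) ℂ) (z₀ : ℂ)
    (h : (P + z₀ • Q).det ≠ 0) : {z : ℂ | (P + z • Q).det = 0}.Finite := by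
  let q : Polynomial ℂ := (P.map Polynomial.C + (Polynomial.X : Polynomial ℂ) • Q.map Polynomial.C).det
  have hq : ∀ z, q.eval z = (P + z • Q).det := by
    intro z
    change Polynomial.evalRingHom z q = _
    rw [RingHom.map_det]
    congr 1
    ext i j
    simp
    ring
  have hq0 : q ≠ 0 := by
    intro h0
    apply h
    rw [← hq, h0]; simp
  refine (Polynomial.finite_setOfPred_isRoot hq0).subset ?_
  intro z hz
  exact (hq z).trans hz

lemma aux_swap {n m : ℕ} (ψ : Matrix (Fin n) (Fin n) ℂ → Matrix (Fin m) (Fin m) ℂ)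
    (hc : ∀ X, IsUnit X → ContinuousAt ψ X)
    (hs : ∀ X, IsUnit X → spectrum ℂ (ψ X) ⊆ spectrum ℂ X)
    (P : Matrix (Fin n) (Fin n) ℂ) (hP : P.det ≠ 0) (d : Fin n → ℂ) (hd : Function.Injective d)
    (hd0 : ∀ i, d i ≠ 0) (i j : Fin n) :
    (ψ (P * diagonal d * P⁻¹)).charpoly.rootMultiplicity (d i) =
    (ψ (P * diagonal d * P⁻¹)).charpoly.rootMultiplicity (d j) := by
  classical
  set σ := Equiv.swap i j
  let P' := P.submatrix id σ
  let Pz : ℂ → Matrix (Fin n) (Fin n) ℂ := fun z => P + z • (P' - P)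
  let dz : ℂ → Fin n → ℂ := fun z k => d k + z * (d (σ k) - d k)
  let T : Set ℂ := {z | (Pz z).det ≠ 0 ∧ (∀ k, dz z k ≠ 0) ∧ Function.Injective (dz z)}
  have hT : Tᶜ.Finite := by
    refine (((aux_detfin P (P' - P) 0 (by simpa using hP)).union
      (Set.finite_iUnion fun k => aux_affine (d k) (d (σ k) - d k) (hd0 k))).union
      (Set.finite_iUnion fun k : Fin n => Set.finite_iUnion fun l : Fin n => Set.finite_iUnion
        fun hkl : k ≠ l => aux_affine (d k - d l) ((d (σ k) - d k) - (d (σ l) - d l))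
          (sub_ne_zero.2 (hd.ne hkl)))).subset ?_
    intro z hz
    by_contra hcon
    apply hz
    simp only [Set.mem_union, Set.mem_iUnion, Set.mem_ofPred_eq, not_or, not_exists] at hcon
    refine ⟨hcon.1.1, hcon.1.2, fun k l hkl => ?_⟩
    by_contra hne
    apply hcon.2 k l hne
    simp only [dz] at hkl
    linear_combination hkl
  have hTc : IsPreconnected T := by
    have := (hT.countable.isConnected_compl_of_one_lt_rank (by simp)).isPreconnected
    rwa [compl_compl] at this
  have : PreconnectedSpace T := Subtype.preconnectedSpace hTc
  let A : ℂ → Matrix (Fin n) (Fin n) ℂ := fun z => Pz z * diagonal (dz z) * (Pz z)⁻¹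
  have hAu : ∀ z ∈ T, IsUnit (A z) := by
    intro z hz
    rw [Matrix.isUnit_iff_isUnit_det, isUnit_iff_ne_zero]
    simp only [A, det_mul, det_diagonal, Matrix.det_nonsing_inv, Ring.inverse_eq_inv']
    exact mul_ne_zero (mul_ne_zero hz.1 (Finset.prod_ne_zero_iff.2 fun k _ => hz.2.1 k))
      (inv_ne_zero hz.1)
  have hAs : ∀ z ∈ T, spectrum ℂ (A z) ⊆ Set.range (dz z) := by
    intro z hz μ hμ
    have hu : IsUnit (Pz z) := by
      rw [Matrix.isUnit_iff_isUnit_det, isUnit_iff_ne_zero]; exact hz.1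
    rw [Matrix.mem_spectrum_iff_isRoot_charpoly] at hμ
    have : (A z).charpoly = ∏ k, (Polynomial.X - Polynomial.C (dz z k)) := by
      have := Matrix.charpoly_units_conj hu.unit (diagonal (dz z))
      rw [Matrix.charpoly_diagonal] at this
      rw [← this]
      simp [A]
    rw [this, Polynomial.IsRoot, Polynomial.eval_prod, Finset.prod_eq_zero_iff] at hμ
    obtain ⟨k, _, hk⟩ := hμ
    exact ⟨k, by simp [sub_eq_zero] at hk; exact hk.symm⟩
  have hPzc : Continuous Pz := by fun_prop
  have hdzc : Continuous dz := by fun_prop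
  have hAc : ∀ z ∈ T, ContinuousAt A z := by
    intro z hz
    have h1 : ContinuousAt (fun z => (Pz z)⁻¹) z := by
      simp only [Matrix.inv_def, Ring.inverse_eq_inv']
      have h2 : ContinuousAt (fun z => (Pz z).det) z := hPzc.matrix_det.continuousAt
      exact (h2.inv₀ hz.1).smul hPzc.matrix_adjugate.continuousAt
    exact ContinuousAt.mul (by fun_prop) h1
  have h0 : (0:ℂ) ∈ T := by
    simp [T, Pz, dz, hP, hd0]; exact hd
  have hP' : P'.det ≠ 0 := by
    simp only [P']
    rw [Matrix.det_permute']
    exact mul_ne_zero (by simp) hP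
  have h1 : (1:ℂ) ∈ T := by
    refine ⟨by simpa [Pz] using hP', by simp [dz, hd0], ?_⟩
    have : dz 1 = d ∘ σ := by ext k; simp [dz]
    rw [this]; exact hd.comp σ.injective
  have key := aux_const_s2 (Y := T) (fun z => ψ (A z))
    (continuous_iff_continuousAt.2 fun z => ContinuousAt.comp (f := fun z : T => A z) (hc _ (hAu z z.2))
      (ContinuousAt.comp (hAc z z.2) continuous_subtype_val.continuousAt))
    (fun z => dz z) (by fun_prop) (fun z => z.2.2.2)
    (fun z => (hs _ (hAu z z.2)).trans (hAs z z.2)) ⟨0, h0⟩ ⟨1, h1⟩ i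
  have hA0 : A 0 = P * diagonal d * P⁻¹ := by simp [A, Pz, dz]
  have hA1 : A 1 = P * diagonal d * P⁻¹ := by
    have e : Pz 1 * diagonal (dz 1) = (P * diagonal d * P⁻¹) * Pz 1 := by
      have hPz : Pz 1 = P * (1 : Matrix (Fin n) (Fin n) ℂ).submatrix id σ := by
        ext a b; simp [Pz, P', Matrix.mul_apply, Matrix.one_apply]
      have : IsUnit P.det := isUnit_iff_ne_zero.2 hP
      rw [hPz, Matrix.mul_assoc _ P⁻¹, ← Matrix.mul_assoc P⁻¹, Matrix.nonsing_inv_mul _ this,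
        Matrix.one_mul, Matrix.mul_assoc, Matrix.mul_assoc]
      congr 1
      ext a b
      simp only [mul_diagonal, diagonal_mul, submatrix_apply, id, Matrix.one_apply]
      split_ifs with h
      · simp [dz, h]
      · simp
    have hu : IsUnit (Pz 1).det := isUnit_iff_ne_zero.2 h1.1
    simp only [A]
    rw [e, Matrix.mul_assoc, Matrix.mul_nonsing_inv _ hu, Matrix.mul_one]
  simp only [hA0, hA1] at key
  simpa [dz, σ] using key

lemma aux_regular {n m : ℕ} (hn : 1 ≤ n)
    (ψ : Matrix (Fin n) (Fin n) ℂ → Matrix (Fin m) (Fin m) ℂ)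
    (hc : ∀ X, IsUnit X → ContinuousAt ψ X)
    (hs : ∀ X, IsUnit X → spectrum ℂ (ψ X) ⊆ spectrum ℂ X)
    (X : Matrix (Fin n) (Fin n) ℂ) (hX : IsUnit X) (hsep : X.charpoly.Separable) :
    n ∣ m ∧ (ψ X).charpoly = X.charpoly ^ (m / n) := by
  classical
  have hnd := Polynomial.nodup_roots hsep
  have hcard : X.charpoly.roots.toFinset.card = n := by
    rw [Multiset.toFinset_card_of_nodup hnd, ← (IsAlgClosed.splits X.charpoly).natDegree_eq_card_roots,
      Matrix.charpoly_natDegree_eq_dim, Fintype.card_fin]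
  let e := (Finset.equivFinOfCardEq hcard).symm
  let d : Fin n → ℂ := fun i => (e i : ℂ)
  have hd : Function.Injective d := Subtype.val_injective.comp e.injective
  have hspec : ∀ i, d i ∈ spectrum ℂ X := by
    intro i
    have := (e i).2
    rw [Multiset.mem_toFinset, Polynomial.mem_roots (Matrix.charpoly_monic X).ne_zero] at this
    exact Matrix.mem_spectrum_iff_isRoot_charpoly.2 this
  have hrange : spectrum ℂ X ⊆ Set.range d := by
    intro a ha
    rw [Matrix.mem_spectrum_iff_isRoot_charpoly] at ha
    have : a ∈ X.charpoly.roots.toFinset := by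
      rw [Multiset.mem_toFinset, Polynomial.mem_roots (Matrix.charpoly_monic X).ne_zero]; exact ha
    exact ⟨e.symm ⟨a, this⟩, by simp [d]⟩
  have hd0 : ∀ i, d i ≠ 0 := by
    intro i h
    have := hspec i
    rw [h, spectrum.zero_mem_iff] at this
    exact this hX
  have hev : ∀ i, ∃ v, Module.End.HasEigenvector (Matrix.toLin' X) (d i) v := by
    intro i
    have := hspec i
    rw [← Matrix.spectrum_toLin', ← Module.End.hasEigenvalue_iff_mem_spectrum] at this
    exact this.exists_hasEigenvector
  choose v hv using hev
  have hli := Module.End.eigenvectors_linearIndependent' (Matrix.toLin' X) d hd v hv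
  let P : Matrix (Fin n) (Fin n) ℂ := Matrix.of fun i j => v j i
  have hPu : IsUnit P := by
    rw [← Matrix.linearIndependent_cols_iff_isUnit]
    exact hli
  have hPd : IsUnit P.det := (Matrix.isUnit_iff_isUnit_det _).1 hPu
  have hXP : X * P = P * diagonal d := by
    ext a b
    have := congrFun (hv b).apply_eq_smul a
    simp only [Matrix.toLin'_apply, Pi.smul_apply, smul_eq_mul] at this
    rw [mul_diagonal]
    simp only [P, Matrix.of_apply, mul_comm _ (d b)]
    rw [← this]; rfl
  have hXe : P * diagonal d * P⁻¹ = X := by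
    rw [← hXP, Matrix.mul_assoc, Matrix.mul_nonsing_inv _ hPd, Matrix.mul_one]
  have key := aux_swap ψ hc hs P hPd.ne_zero d hd hd0
  rw [hXe] at key
  have h1 := aux_split (ψ X) d hd ((hs X hX).trans hrange)
  have hXc : X.charpoly = ∏ i, (Polynomial.X - Polynomial.C (d i)) := by
    rw [← hXe]
    have := Matrix.charpoly_units_conj hPu.unit (diagonal d)
    rw [Matrix.charpoly_diagonal] at this
    rw [← this]
    simp
  set k := (ψ X).charpoly.rootMultiplicity (d ⟨0, hn⟩) with hk
  have h2 : (ψ X).charpoly = X.charpoly ^ k := by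
    rw [hXc, h1, ← Finset.prod_pow]
    exact Finset.prod_congr rfl fun i _ => by rw [key i ⟨0, hn⟩]
  have h3 := congrArg Polynomial.natDegree h2
  rw [Polynomial.natDegree_pow, Matrix.charpoly_natDegree_eq_dim, Matrix.charpoly_natDegree_eq_dim,
    Fintype.card_fin, Fintype.card_fin] at h3
  have h4 : m / n = k := by rw [h3]; exact Nat.mul_div_cancel k hn
  exact ⟨⟨k, by rw [h3, mul_comm]⟩, by rw [h4, h2]⟩

lemma aux_diag_sep (n : ℕ) : ((diagonal fun i : Fin n => ((i : ℕ) : ℂ) + 1).charpoly).Separable := by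
  rw [Matrix.charpoly_diagonal]
  rw [Polynomial.separable_prod_X_sub_C_iff]
  intro i j h
  apply Fin.ext
  simpa using h

lemma aux_diag_unit (n : ℕ) : IsUnit (diagonal fun i : Fin n => ((i : ℕ) : ℂ) + 1) := by
  rw [Matrix.isUnit_iff_isUnit_det, isUnit_iff_ne_zero, det_diagonal, Finset.prod_ne_zero_iff]
  intro i _
  exact Nat.cast_add_one_ne_zero _

lemma aux_sepfin {n : ℕ} (P Q : Matrix (Fin n) (Fin n) ℂ) (z₀ : ℂ)
    (h : (P + z₀ • Q).charpoly.Separable) : {z : ℂ | ¬ (P + z • Q).charpoly.Separable}.Finite := by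
  let M := (P.map Polynomial.C + (Polynomial.X : Polynomial ℂ) • Q.map Polynomial.C)
  let q : Polynomial ℂ := Polynomial.resultant M.charpoly M.charpoly.derivative n (n-1)
  have hM : ∀ z, M.charpoly.map (Polynomial.evalRingHom z) = (P + z • Q).charpoly := by
    intro z
    rw [← Matrix.charpoly_map]
    congr 1
    ext i j
    simp [M]
    ring
  have hq : ∀ z, q.eval z = 0 ↔ ¬ (P + z • Q).charpoly.Separable := by
    intro z
    change Polynomial.evalRingHom z q = 0 ↔ _
    simp only [q]
    rw [← Polynomial.resultant_map_map, ← Polynomial.derivative_map, hM, Polynomial.Separable]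
    have hdeg := Matrix.charpoly_natDegree_eq_dim (P + z • Q)
    rw [Fintype.card_fin] at hdeg
    have hdeg' : (P + z • Q).charpoly.derivative.natDegree = n - 1 := by
      rw [Polynomial.natDegree_derivative, hdeg]
    have := Polynomial.resultant_eq_zero_iff (f := (P + z • Q).charpoly) (g := (P + z • Q).charpoly.derivative)
    rw [hdeg, hdeg'] at this
    rw [this]
    have h0 := (Matrix.charpoly_monic (P + z • Q)).ne_zero
    exact ⟨fun h => h.2, fun h => ⟨Or.inl h0, h⟩⟩
  have hq0 : q ≠ 0 := by
    intro h0
    apply (hq z₀).1 _ h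
    rw [h0]; simp
  refine (Polynomial.finite_setOfPred_isRoot hq0).subset ?_
  intro z hz
  exact (hq z).2 hz

lemma aux_all {n m : ℕ} (hn : 1 ≤ n)
    (φ : {X : Matrix (Fin n) (Fin n) ℂ // IsUnit X} → Matrix (Fin m) (Fin m) ℂ)
    (hφ : Continuous φ) (hs : ∀ X, spectrum ℂ (φ X) ⊆ spectrum ℂ X.val) :
    n ∣ m ∧ ∀ X, (φ X).charpoly = X.val.charpoly ^ (m / n) := by
  classical
  let ψ : Matrix (Fin n) (Fin n) ℂ → Matrix (Fin m) (Fin m) ℂ :=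
    fun X => if h : IsUnit X then φ ⟨X, h⟩ else 0
  have hψ : ∀ X : {X : Matrix (Fin n) (Fin n) ℂ // IsUnit X}, ψ X.1 = φ X := by
    intro X; simp [ψ, X.2]
  have hopen : IsOpen {X : Matrix (Fin n) (Fin n) ℂ | IsUnit X} := by
    have : {X : Matrix (Fin n) (Fin n) ℂ | IsUnit X} = {X | X.det ≠ 0} := by
      ext X; simp [Matrix.isUnit_iff_isUnit_det]
    rw [this]
    exact isOpen_ne_fun (by fun_prop) continuous_const
  have hcψ : ∀ X, IsUnit X → ContinuousAt ψ X := by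
    intro X hX
    have hemb : Topology.IsOpenEmbedding
        (Subtype.val : {X : Matrix (Fin n) (Fin n) ℂ // IsUnit X} → _) :=
      ⟨Topology.IsEmbedding.subtypeVal, by rw [Subtype.range_coe_subtype]; exact hopen⟩
    have := hemb.continuousAt_iff (g := ψ) (x := ⟨X, hX⟩)
    refine this.1 ?_
    have h2 : ψ ∘ Subtype.val = φ := funext hψ
    rw [h2]
    exact hφ.continuousAt
  have hsψ : ∀ X, IsUnit X → spectrum ℂ (ψ X) ⊆ spectrum ℂ X := by
    intro X hX
    have := hs ⟨X, hX⟩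
    rwa [← hψ] at this
  have hreg := aux_regular hn ψ hcψ hsψ
  refine ⟨(hreg _ (aux_diag_unit n) (aux_diag_sep n)).1, ?_⟩
  rintro ⟨X, hX⟩
  rw [← hψ]
  simp only
  set D : Matrix (Fin n) (Fin n) ℂ := diagonal fun i : Fin n => ((i : ℕ) : ℂ) + 1 with hD
  let A : ℂ → Matrix (Fin n) (Fin n) ℂ := fun z => X + z • (D - X)
  have hA0 : A 0 = X := by simp [A]
  have hA : Continuous A := by fun_prop
  have hsep : {z : ℂ | ¬ (A z).charpoly.Separable}.Finite :=
    aux_sepfin X (D - X) 1 (by simpa using aux_diag_sep n)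
  have hev : ∀ᶠ z in nhdsWithin (0:ℂ) {0}ᶜ, (A z).charpoly.Separable := by
    have h1 : ∀ᶠ z in nhdsWithin (0:ℂ) {0}ᶜ, z ∉ ({z : ℂ | ¬ (A z).charpoly.Separable} \ {0}) := by
      apply nhdsWithin_le_nhds
      exact (hsep.subset Set.sdiff_subset).isClosed.isOpen_compl.mem_nhds (by simp)
    filter_upwards [h1, self_mem_nhdsWithin] with z hz hz0
    by_contra hcon
    exact hz ⟨hcon, hz0⟩
  have hevu : ∀ᶠ z in nhdsWithin (0:ℂ) {0}ᶜ, IsUnit (A z) := by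
    apply nhdsWithin_le_nhds
    exact hA.continuousAt.eventually (hopen.mem_nhds (by rw [hA0]; exact hX))
  have e : ∀ (k : ℕ) (B : Matrix (Fin k) (Fin k) ℂ) (x : ℂ),
      B.charpoly.eval x = (x • (1 : Matrix (Fin k) (Fin k) ℂ) - B).det := by
    intro k B x
    rw [Matrix.eval_charpoly, Matrix.scalar_apply, Matrix.smul_one_eq_diagonal]
  apply Polynomial.funext
  intro x
  have t1 : Filter.Tendsto (fun z => (ψ (A z)).charpoly.eval x) (nhdsWithin (0:ℂ) {0}ᶜ)
      (nhds ((ψ X).charpoly.eval x)) := by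
    have hc0 : ContinuousAt (fun z => ψ (A z)) 0 :=
      ContinuousAt.comp (f := A) (hcψ _ (by rw [hA0]; exact hX)) hA.continuousAt
    have hdet : Continuous fun B : Matrix (Fin m) (Fin m) ℂ =>
      (x • (1 : Matrix (Fin m) (Fin m) ℂ) - B).det := by fun_prop
    have := (hdet.continuousAt.comp hc0).tendsto
    simp only [Function.comp_def, hA0] at this
    simp only [e]
    exact this.mono_left nhdsWithin_le_nhds
  have t2 : Filter.Tendsto (fun z => ((A z).charpoly ^ (m / n)).eval x) (nhdsWithin (0:ℂ) {0}ᶜ)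
      (nhds ((X.charpoly ^ (m / n)).eval x)) := by
    have hdet : Continuous fun z : ℂ =>
      (x • (1 : Matrix (Fin n) (Fin n) ℂ) - A z).det ^ (m / n) := by fun_prop
    have := hdet.tendsto 0
    simp only [hA0] at this
    simp only [Polynomial.eval_pow, e]
    exact this.mono_left nhdsWithin_le_nhds
  refine tendsto_nhds_unique t1 (t2.congr' ?_)
  filter_upwards [hev, hevu] with z h1 h2
  rw [(hreg _ h2 h1).2]

lemma aux_exists_s2 {n m : ℕ} (h : n ∣ m) :
    ∃ φ : {X : Matrix (Fin n) (Fin n) ℂ // IsUnit X} → Matrix (Fin m) (Fin m) ℂ,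
        Continuous φ ∧ ∀ X, spectrum ℂ (φ X) ⊆ spectrum ℂ X.val := by
  obtain ⟨k, rfl⟩ := h
  let F : Matrix (Fin n) (Fin n) ℂ →ₐ[ℂ] Matrix (Fin n × Fin k) (Fin n × Fin k) ℂ :=
    { (Matrix.blockDiagonalRingHom (Fin n) (Fin k) ℂ).comp (Pi.constRingHom (Fin k) _) with
      commutes' := by
        intro r
        ext ⟨a, b⟩ ⟨c, d⟩
        simp [Matrix.blockDiagonal_apply, Matrix.algebraMap_matrix_apply, Prod.ext_iff]
        grind }
  let G := ((Matrix.reindexAlgEquiv ℂ ℂ (finProdFinEquiv (m := n) (n := k))).toAlgHom).comp F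
  refine ⟨fun X => G X.1, ?_, fun X => AlgHom.spectrum_apply_subset G X.1⟩
  exact (LinearMap.continuous_of_finiteDimensional G.toLinearMap).comp continuous_subtype_val

/-- For integers `m, n ≥ 1`, there exists a continuous spectrum-shrinking
map `φ : GL(n) → M_m` iff `n ∣ m`; and when `n ∣ m`, every continuous spectrum-shrinking
`φ : GL(n) → M_m` satisfies `k_{φ(X)} = (k_X)^(m/n)` (in particular it preserves spectra). -/
theorem exists_continuous_spectrum_shrinker_GLn_iff (n m : ℕ) (hn : 1 ≤ n) (hm : 1 ≤ m) :
    ((∃ φ : {X : Matrix (Fin n) (Fin n) ℂ // IsUnit X} → Matrix (Fin m) (Fin m) ℂ,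
        Continuous φ ∧ ∀ X, spectrum ℂ (φ X) ⊆ spectrum ℂ X.val) ↔ n ∣ m) ∧
    (n ∣ m → ∀ φ : {X : Matrix (Fin n) (Fin n) ℂ // IsUnit X} → Matrix (Fin m) (Fin m) ℂ,
        Continuous φ → (∀ X, spectrum ℂ (φ X) ⊆ spectrum ℂ X.val) →
        ∀ X, (φ X).charpoly = X.val.charpoly ^ (m / n) ∧
          spectrum ℂ (φ X) = spectrum ℂ X.val) := by
  refine ⟨⟨?_, aux_exists_s2⟩, ?_⟩
  · rintro ⟨φ, hφ, hs⟩
    exact (aux_all hn φ hφ hs).1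
  · intro hdvd φ hφ hs X
    have h := (aux_all hn φ hφ hs).2 X
    refine ⟨h, (hs X).antisymm ?_⟩
    intro a ha
    rw [Matrix.mem_spectrum_iff_isRoot_charpoly, Polynomial.IsRoot] at ha ⊢
    have hk : m / n ≠ 0 := (Nat.div_pos (Nat.le_of_dvd hm hdvd) hn).ne'
    rw [h, Polynomial.eval_pow, ha, zero_pow hk]
end

section
/- Let m, n ≥ 1 be integers and let U(n) denote the group of n×n unitary complex matrices, topologized as a subspace of M_n. There exists a continuous spectrum-shrinking map φ : U(n) → M_m if and only if n divides m; and when n divides m, every continuous spectrum-shrinking map φ : U(n) → M_m satisfies k_{φ(X)} = (k_X)^{m/n} for all X ∈ U(n) (in particular, sp(φ(X)) = sp(X) for all X). -/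
open Matrix

lemma ssu_eval_charpoly {m : ℕ} (M : Matrix (Fin m) (Fin m) ℂ) (x : ℂ) :
    M.charpoly.eval x = (Matrix.scalar (Fin m) x - M).det := by
  rw [Matrix.eval_charpoly]

lemma ssu_continuous_eval {T : Type*} [TopologicalSpace T] {m : ℕ}
    {f : T → Matrix (Fin m) (Fin m) ℂ} (hf : Continuous f) (x : ℂ) :
    Continuous fun t => (f t).charpoly.eval x := by
  simp_rw [ssu_eval_charpoly]
  exact (continuous_const.sub hf).matrix_det

lemma ssu_isClosed {T : Type*} [TopologicalSpace T] {m : ℕ} {ι : Type*} [Fintype ι]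
    {f : T → Matrix (Fin m) (Fin m) ℂ} (hf : Continuous f) {l : T → ι → ℂ} (hl : Continuous l)
    (a : ι → ℕ) :
    IsClosed {t | (f t).charpoly = ∏ j, (Polynomial.X - Polynomial.C (l t j)) ^ a j} := by
  have : {t | (f t).charpoly = ∏ j, (Polynomial.X - Polynomial.C (l t j)) ^ a j}
      = ⋂ x : ℂ, {t | (f t).charpoly.eval x = ∏ j, (x - l t j) ^ a j} := by
    ext t
    simp only [Set.mem_ofPred_eq, Set.mem_iInter]
    constructor
    · intro h x
      rw [h, Polynomial.eval_prod]
      simp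
    · intro h
      apply Polynomial.funext
      intro x
      rw [h, Polynomial.eval_prod]
      simp
  rw [this]
  refine isClosed_iInter fun x => isClosed_eq (ssu_continuous_eval hf x) ?_
  fun_prop

lemma ssu_rootMult {ι : Type*} [Fintype ι] (l : ι → ℂ) (hl : Function.Injective l) (a : ι → ℕ)
    (j : ι) :
    (∏ j, (Polynomial.X - Polynomial.C (l j)) ^ a j).rootMultiplicity (l j) = a j := by
  classical
  rw [← Polynomial.count_roots, Polynomial.roots_prod]
  · simp only [Polynomial.roots_pow, Polynomial.roots_X_sub_C, Multiset.count_bind,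
      Multiset.count_nsmul, Multiset.count_singleton]
    change ∑ i, _ = _
    rw [Finset.sum_eq_single j]
    · simp
    · intro i _ hi
      rw [if_neg]
      · simp
      · exact fun h => hi (hl h).symm
    · simp
  · exact Finset.prod_ne_zero_iff.2 fun i _ => pow_ne_zero _ (Polynomial.X_sub_C_ne_zero _)

lemma ssu_factor {m : ℕ} {ι : Type*} [Fintype ι] (M : Matrix (Fin m) (Fin m) ℂ) (l : ι → ℂ)
    (hl : Function.Injective l) (hs : spectrum ℂ M ⊆ Set.range l) :
    M.charpoly = ∏ j, (Polynomial.X - Polynomial.C (l j)) ^ M.charpoly.rootMultiplicity (l j) := by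
  classical
  conv_lhs => rw [(IsAlgClosed.splits M.charpoly).eq_prod_roots_of_monic M.charpoly_monic]
  rw [Finset.prod_multiset_map_count]
  rw [Finset.prod_subset (s₂ := Finset.univ.image l)]
  · rw [Finset.prod_image (fun _ _ _ _ h => hl h)]
    simp only [Polynomial.count_roots]
  · intro x hx
    have hx' : x ∈ spectrum ℂ M := by
      rw [Matrix.mem_spectrum_iff_isRoot_charpoly]
      exact Polynomial.isRoot_of_mem_roots (Multiset.mem_toFinset.1 hx)
    obtain ⟨j, rfl⟩ := hs hx'
    simp
  · intro x _ hx
    rw [Multiset.mem_toFinset] at hx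
    rw [Multiset.count_eq_zero_of_notMem hx, pow_zero]

lemma ssu_mult_const {T : Type*} [TopologicalSpace T] [PreconnectedSpace T] {m : ℕ}
    {ι : Type*} [Fintype ι]
    {f : T → Matrix (Fin m) (Fin m) ℂ} (hf : Continuous f) {l : T → ι → ℂ} (hl : Continuous l)
    (hinj : ∀ t, Function.Injective (l t)) (hs : ∀ t, spectrum ℂ (f t) ⊆ Set.range (l t)) :
    ∃ a : ι → ℕ, ∀ t, (f t).charpoly = ∏ j, (Polynomial.X - Polynomial.C (l t j)) ^ a j := by
  rcases isEmpty_or_nonempty T with hT | ⟨⟨t₀⟩⟩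
  · exact ⟨0, fun t => hT.elim t⟩
  let B : T → (ι → Fin (m + 1)) := fun t j =>
    ⟨(f t).charpoly.rootMultiplicity (l t j), by
      classical
      have h1 := Polynomial.card_roots' (f t).charpoly
      rw [Matrix.charpoly_natDegree_eq_dim, Fintype.card_fin] at h1
      have h2 := Multiset.count_le_card (l t j) (f t).charpoly.roots
      rw [Polynomial.count_roots] at h2
      omega⟩
  have hB : ∀ b : ι → Fin (m + 1), B ⁻¹' {b}
      = {t | (f t).charpoly = ∏ j, (Polynomial.X - Polynomial.C (l t j)) ^ (b j : ℕ)} := by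
    intro b
    ext t
    simp only [Set.mem_preimage, Set.mem_singleton_iff, Set.mem_ofPred_eq]
    constructor
    · rintro rfl
      exact ssu_factor (f t) (l t) (hinj t) (hs t)
    · intro h
      funext j
      apply Fin.ext
      change (f t).charpoly.rootMultiplicity (l t j) = _
      rw [h, ssu_rootMult _ (hinj t)]
  have hc : Continuous B := by
    rw [continuous_iff_isClosed]
    intro s _
    rw [← Set.biUnion_preimage_singleton]
    refine Set.Finite.isClosed_biUnion (Set.toFinite s) fun b _ => ?_
    rw [hB]
    exact ssu_isClosed hf hl _
  refine ⟨fun j => B t₀ j, fun t => ?_⟩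
  have h1 : B t = B t₀ := PreconnectedSpace.constant inferInstance hc
  have h2 : t ∈ B ⁻¹' {B t₀} := h1
  rw [hB] at h2
  exact h2

lemma ssu_diag_aux {n : ℕ} (X : Matrix (Fin n) (Fin n) ℂ) (hX : X * Xᴴ = 1) :
    ∃ V : Matrix (Fin n) (Fin n) ℂ, V * Vᴴ = 1 ∧ ∃ d : Fin n → ℂ, X = V * diagonal d * Vᴴ := by
  have hX' : Xᴴ * X = 1 := mul_eq_one_comm.1 hX
  obtain ⟨c, hc1, hc2⟩ : ∃ c : ℂ, ‖c‖ = 1 ∧ c ∉ spectrum ℂ X := by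
    have hinf : (Metric.sphere (0 : ℂ) 1).Infinite := by
      refine IsPreconnected.infinite_of_nontrivial
        (isPreconnected_sphere (by rw [Complex.rank_real_complex]; norm_num) 0 1)
        ⟨1, by simp, -1, by simp, ?_⟩
      norm_num
    obtain ⟨c, hc, hc'⟩ := hinf.exists_notMem_finite (Matrix.finite_spectrum X)
    exact ⟨c, by simpa using hc, hc'⟩
  have hcc : c * star c = 1 := by
    rw [Complex.star_def, Complex.mul_conj, Complex.normSq_eq_norm_sq, hc1]; simp
  rw [spectrum.notMem_iff, Algebra.algebraMap_eq_smul_one] at hc2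
  have hdet := (Matrix.isUnit_iff_isUnit_det _).1 hc2
  set D := c • (1 : Matrix (Fin n) (Fin n) ℂ) - X with hD
  set S := c • (1 : Matrix (Fin n) (Fin n) ℂ) + X with hS
  have hDS : Dᴴ * S = - (Sᴴ * D) := by
    simp only [hD, hS, conjTranspose_sub, conjTranspose_add, conjTranspose_smul,
      conjTranspose_one, sub_mul, mul_sub, add_mul, mul_add, hX', smul_mul_assoc, mul_smul_comm,
      one_mul, mul_one, smul_add, smul_sub, smul_smul, hcc, one_smul]
    abel
  set H := Complex.I • (S * D⁻¹) with hH
  have hHh : H.IsHermitian := by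
    have hdet' : IsUnit (Dᴴ).det := by rw [det_conjTranspose]; exact hdet.star
    have e1 : Dᴴ * H * D = Dᴴ * Hᴴ * D := by
      have a1 : Dᴴ * H * D = Complex.I • (Dᴴ * S) := by
        rw [hH, mul_smul_comm, smul_mul_assoc, mul_assoc, mul_assoc, nonsing_inv_mul _ hdet,
          mul_one]
      have a3 : Dᴴ * Hᴴ * D = star Complex.I • (Sᴴ * D) := by
        rw [hH, conjTranspose_smul, conjTranspose_mul, conjTranspose_nonsing_inv, mul_smul_comm,
          smul_mul_assoc, ← mul_assoc, mul_nonsing_inv _ hdet', one_mul]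
      rw [a1, a3, hDS]
      simp
    have e2 : Dᴴ * H = Dᴴ * Hᴴ := by
      have := congrArg (· * D⁻¹) e1
      simpa only [mul_assoc, mul_nonsing_inv _ hdet, mul_one] using this
    have := congrArg ((Dᴴ)⁻¹ * ·) e2
    simp only [← mul_assoc, nonsing_inv_mul _ hdet', one_mul] at this
    exact this.symm
  have hHX : (H + Complex.I • 1) * X = c • (H - Complex.I • 1) := by
    have e : H * D = Complex.I • S := by
      rw [hH, smul_mul_assoc, mul_assoc, nonsing_inv_mul _ hdet, mul_one]
    rw [hD, hS, mul_sub, mul_smul_comm, mul_one] at e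
    rw [add_mul, smul_mul_assoc Complex.I 1 X, one_mul, smul_sub,
      smul_comm c Complex.I (1 : Matrix (Fin n) (Fin n) ℂ)]
    rw [smul_add] at e
    have : H * X = c • H - (Complex.I • c • 1 + Complex.I • X) := by rw [← e]; abel
    rw [this]; abel
  set V : Matrix (Fin n) (Fin n) ℂ := (hHh.eigenvectorUnitary).1 with hV
  have hV1 : V * Vᴴ = 1 := Matrix.mem_unitaryGroup_iff.1 hHh.eigenvectorUnitary.2
  have hV2 : Vᴴ * V = 1 := mul_eq_one_comm.1 hV1
  have hsp : H = V * diagonal (fun j => (hHh.eigenvalues j : ℂ)) * Vᴴ := by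
    have := hHh.spectral_theorem
    rw [Unitary.conjStarAlgAut_apply] at this
    exact this
  have hsp' : Vᴴ * H = diagonal (fun j => (hHh.eigenvalues j : ℂ)) * Vᴴ := by
    conv_lhs => rw [hsp]
    rw [← mul_assoc, ← mul_assoc, hV2, one_mul]
  set L := diagonal (fun j => (hHh.eigenvalues j : ℂ)) with hL
  have hZ : (L + Complex.I • 1) * (Vᴴ * X * V) = c • (L - Complex.I • 1) := by
    have : Vᴴ * ((H + Complex.I • 1) * X) * V = Vᴴ * (c • (H - Complex.I • 1)) * V := by rw [hHX]
    rw [← mul_assoc, mul_add, hsp', mul_smul_comm, mul_smul_comm, mul_sub, hsp', smul_mul_assoc,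
      sub_mul, mul_smul_comm, smul_mul_assoc, mul_one, mul_assoc L, hV2, mul_one] at this
    rw [← this, add_mul, add_mul, add_mul, smul_mul_assoc, smul_mul_assoc, smul_mul_assoc, one_mul]
    simp only [mul_assoc]
  refine ⟨V, hV1, fun j => (Vᴴ * X * V) j j, ?_⟩
  have hdiag : diagonal (fun j => (Vᴴ * X * V) j j) = Vᴴ * X * V := by
    ext i j
    by_cases hij : i = j
    · subst hij; simp
    · rw [diagonal_apply_ne _ hij]
      have h := congrFun (congrFun hZ i) j
      have hL' : L + Complex.I • 1 = diagonal (fun j => (hHh.eigenvalues j : ℂ) + Complex.I) := by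
        rw [hL, smul_one_eq_diagonal, diagonal_add]
      have hL'' : L - Complex.I • 1 = diagonal (fun j => (hHh.eigenvalues j : ℂ) - Complex.I) := by
        rw [hL, smul_one_eq_diagonal, diagonal_sub]
      rw [hL', hL'', diagonal_mul, Matrix.smul_apply, diagonal_apply_ne _ hij, smul_zero] at h
      rcases mul_eq_zero.1 h with h | h
      · exfalso
        have := congrArg Complex.im h
        simp at this
      · exact h.symm
  rw [hdiag, ← mul_assoc, ← mul_assoc, hV1, one_mul, mul_assoc, hV1, mul_one]

/-- The unitary matrix `V diag(exp(iθ)) V*` -/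
noncomputable def ssuMk {n : ℕ} (V : {X : Matrix (Fin n) (Fin n) ℂ // X * X.conjTranspose = 1})
    (θ : Fin n → ℝ) : {X : Matrix (Fin n) (Fin n) ℂ // X * X.conjTranspose = 1} :=
  ⟨V.1 * diagonal (fun j => Complex.exp (θ j * Complex.I)) * V.1ᴴ, by
    have hV : V.1ᴴ * V.1 = 1 := mul_eq_one_comm.1 V.2
    have hd : diagonal (fun j => Complex.exp (θ j * Complex.I)) *
        (diagonal (fun j => Complex.exp (θ j * Complex.I)))ᴴ = 1 := by
      rw [diagonal_conjTranspose, diagonal_mul_diagonal, ← diagonal_one]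
      congr 1
      funext j
      simp only [Pi.star_apply, Complex.star_def, ← Complex.exp_conj, ← Complex.exp_add]
      simp
    rw [conjTranspose_mul, conjTranspose_mul, conjTranspose_conjTranspose]
    calc _ = V.1 * diagonal (fun j => Complex.exp (θ j * Complex.I)) * (V.1ᴴ * V.1) *
          ((diagonal (fun j => Complex.exp (θ j * Complex.I)))ᴴ * V.1ᴴ) := by
            simp only [mul_assoc]
      _ = V.1 * (diagonal (fun j => Complex.exp (θ j * Complex.I)) *
          (diagonal (fun j => Complex.exp (θ j * Complex.I)))ᴴ) * V.1ᴴ := by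
            rw [hV, mul_one]; simp only [mul_assoc]
      _ = 1 := by rw [hd, mul_one, V.2]⟩

lemma ssuMk_charpoly {n : ℕ} (V : {X : Matrix (Fin n) (Fin n) ℂ // X * X.conjTranspose = 1})
    (θ : Fin n → ℝ) : (ssuMk V θ).1.charpoly =
      ∏ j, (Polynomial.X - Polynomial.C (Complex.exp (θ j * Complex.I))) := by
  have hV : V.1ᴴ * V.1 = 1 := mul_eq_one_comm.1 V.2
  change (V.1 * diagonal _ * V.1ᴴ).charpoly = _
  rw [charpoly_mul_comm, ← mul_assoc, hV, one_mul, charpoly_diagonal]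

lemma ssuMk_spectrum {n : ℕ} (V : {X : Matrix (Fin n) (Fin n) ℂ // X * X.conjTranspose = 1})
    (θ : Fin n → ℝ) : spectrum ℂ (ssuMk V θ).1 =
      Set.range (fun j => Complex.exp (θ j * Complex.I)) := by
  ext x
  rw [Matrix.mem_spectrum_iff_isRoot_charpoly, ssuMk_charpoly, Polynomial.IsRoot.def,
    Polynomial.eval_prod, Finset.prod_eq_zero_iff]
  simp [sub_eq_zero, eq_comm]

lemma ssuMk_continuous {n : ℕ} : Continuous
    fun p : (Fin n → ℝ) × {X : Matrix (Fin n) (Fin n) ℂ // X * X.conjTranspose = 1} =>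
      ssuMk p.2 p.1 := by
  refine Continuous.subtype_mk ?_ _
  have h1 : Continuous fun p : (Fin n → ℝ) ×
      {X : Matrix (Fin n) (Fin n) ℂ // X * X.conjTranspose = 1} => p.2.1 :=
    continuous_subtype_val.comp continuous_snd
  refine (h1.matrix_mul (Continuous.matrix_diagonal ?_)).matrix_mul h1.matrix_conjTranspose
  fun_prop

lemma ssu_diag {n : ℕ} (X : {X : Matrix (Fin n) (Fin n) ℂ // X * X.conjTranspose = 1}) :
    ∃ V, ∃ θ : Fin n → ℝ, (∀ j, 0 ≤ θ j ∧ θ j < 2 * Real.pi) ∧ Monotone θ ∧ X = ssuMk V θ := by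
  obtain ⟨V, hV, d, hd⟩ := ssu_diag_aux X.1 X.2
  have hV2 : Vᴴ * V = 1 := mul_eq_one_comm.1 hV
  have hdd : ∀ j, ∃ t : ℝ, (0 ≤ t ∧ t < 2 * Real.pi) ∧ Complex.exp (t * Complex.I) = d j := by
    intro j
    have h1 : diagonal d = Vᴴ * X.1 * V := by
      rw [hd, ← mul_assoc, ← mul_assoc, hV2, one_mul, mul_assoc, hV2, mul_one]
    have h2 : diagonal d * (diagonal d)ᴴ = 1 := by
      rw [h1, conjTranspose_mul, conjTranspose_mul, conjTranspose_conjTranspose]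
      calc _ = Vᴴ * X.1 * (V * Vᴴ) * (X.1ᴴ * V) := by simp only [mul_assoc]
        _ = Vᴴ * (X.1 * X.1ᴴ) * V := by rw [hV, mul_one]; simp only [mul_assoc]
        _ = 1 := by rw [X.2, mul_one, hV2]
    rw [diagonal_conjTranspose, diagonal_mul_diagonal] at h2
    have h3 := congrFun (congrFun h2 j) j
    simp only [diagonal_apply_eq, one_apply_eq, Pi.star_apply, Complex.star_def,
      Complex.mul_conj, Complex.normSq_eq_norm_sq] at h3
    have h4 : ‖d j‖ ^ 2 = 1 := by exact_mod_cast h3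
    have h5 : ‖d j‖ = 1 := by
      have := norm_nonneg (d j)
      nlinarith
    refine ⟨toIcoMod Real.two_pi_pos 0 (d j).arg, ?_, ?_⟩
    · have := toIcoMod_mem_Ico Real.two_pi_pos 0 (d j).arg
      simpa using this
    · have h6 : Complex.exp ((d j).arg * Complex.I) = d j := by
        have := Complex.norm_mul_exp_arg_mul_I (d j)
        rwa [h5, Complex.ofReal_one, one_mul] at this
      conv_rhs => rw [← h6]
      rw [toIcoMod, Complex.exp_eq_exp_iff_exists_int]
      refine ⟨-toIcoDiv Real.two_pi_pos 0 (d j).arg, ?_⟩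
      push_cast [zsmul_eq_mul]
      ring
  choose θ hθ1 hθ2 using hdd
  let σ := Tuple.sort θ
  have hP : (V.submatrix id σ) * (V.submatrix id σ)ᴴ = 1 := by
    rw [conjTranspose_submatrix, submatrix_mul_equiv, hV, submatrix_id_id]
  refine ⟨⟨V.submatrix id σ, hP⟩, θ ∘ σ, fun j => hθ1 _, Tuple.monotone_sort θ, ?_⟩
  apply Subtype.ext
  change X.1 = V.submatrix id σ * diagonal _ * (V.submatrix id σ)ᴴ
  have : diagonal (fun j => Complex.exp (((θ ∘ σ) j : ℝ) * Complex.I))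
      = (diagonal d).submatrix σ σ := by
    rw [submatrix_diagonal_equiv]
    congr 1
    funext j
    exact hθ2 _
  rw [this, conjTranspose_submatrix, submatrix_mul_equiv, submatrix_mul_equiv, submatrix_id_id, hd]

instance ssu_preconnected {n : ℕ} :
    PreconnectedSpace {X : Matrix (Fin n) (Fin n) ℂ // X * X.conjTranspose = 1} := by
  refine ⟨isPreconnected_of_forall ⟨1, by simp⟩ fun X _ => ?_⟩
  obtain ⟨V, θ, -, -, h⟩ := ssu_diag X
  refine ⟨Set.range fun t : ℝ => ssuMk V (t • θ), Set.subset_univ _, ⟨0, ?_⟩, ⟨1, ?_⟩,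
    isPreconnected_range ?_⟩
  · apply Subtype.ext
    simp [ssuMk, V.2]
  · simp [h]
  · exact ssuMk_continuous.comp
      (f := fun t : ℝ => ((t • θ, V) : (Fin n → ℝ) ×
        {X : Matrix (Fin n) (Fin n) ℂ // X * X.conjTranspose = 1})) (by fun_prop)

/-- admissible angle tuples -/
def ssuS (n : ℕ) : Set (Fin n → ℝ) := {θ | StrictMono θ ∧ ∀ i j, θ i < θ j + 2 * Real.pi}

lemma ssuS_convex (n : ℕ) : Convex ℝ (ssuS n) := by
  rintro x ⟨hx1, hx2⟩ y ⟨hy1, hy2⟩ a b ha hb hab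
  have key : ∀ u v u' v' : ℝ, u < v → u' < v' → a * u + b * u' < a * v + b * v' := by
    intro u v u' v' h h'
    rcases ha.eq_or_lt with rfl | ha
    · have : b = 1 := by linarith
      subst this; linarith
    · nlinarith [mul_pos ha (sub_pos.2 h), mul_nonneg hb (sub_pos.2 h').le]
  constructor
  · intro i j hij
    simpa using key _ _ _ _ (hx1 hij) (hy1 hij)
  · intro i j
    have := key _ _ _ _ (hx2 i j) (hy2 i j)
    simp only [Pi.add_apply, Pi.smul_apply, smul_eq_mul]
    have h2 : a * (2 * Real.pi) + b * (2 * Real.pi) = 2 * Real.pi := by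
      rw [← add_mul, hab, one_mul]
    linarith

lemma ssuS_inj {n : ℕ} {θ : Fin n → ℝ} (h : θ ∈ ssuS n) :
    Function.Injective fun j => Complex.exp (θ j * Complex.I) := by
  intro i j hij
  obtain ⟨k, hk⟩ := Complex.exp_eq_exp_iff_exists_int.1 hij
  have hk' : θ i = θ j + k * (2 * Real.pi) := by
    have := congrArg Complex.im hk
    simpa using this
  have h1 := h.2 i j
  have h2 := h.2 j i
  have hp := Real.pi_pos
  have k1 : (k : ℝ) < 1 := by
    by_contra hc
    push Not at hc
    nlinarith
  have k2 : (-1 : ℝ) < k := by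
    by_contra hc
    push Not at hc
    nlinarith
  have : k = 0 := by
    have : k < 1 := by exact_mod_cast k1
    have : -1 < k := by exact_mod_cast k2
    omega
  subst this
  apply h.1.injective
  simpa using hk'

/-- rotated regular angles -/
noncomputable def ssuR (n : ℕ) (s : ℝ) : Fin n → ℝ := fun j => 2 * Real.pi * ((j : ℝ) + s) / n

lemma ssuR_mem (n : ℕ) (s : ℝ) : ssuR n s ∈ ssuS n := by
  have hp := Real.pi_pos
  constructor
  · intro i j hij
    have hn : (0 : ℝ) < n := by exact_mod_cast i.pos
    have : ((i : ℕ) : ℝ) < (j : ℕ) := by exact_mod_cast hij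
    unfold ssuR
    gcongr
  · intro i j
    have hn : (0 : ℝ) < n := by exact_mod_cast i.pos
    have h1 : ((i : ℕ) : ℝ) < n := by exact_mod_cast i.2
    have h2 : (0 : ℝ) ≤ (j : ℕ) := by positivity
    unfold ssuR
    rw [div_add' _ _ _ hn.ne', div_lt_div_iff_of_pos_right hn]
    nlinarith

lemma ssuS_closure {n : ℕ} {θ : Fin n → ℝ} (h1 : ∀ j, 0 ≤ θ j ∧ θ j < 2 * Real.pi)
    (h2 : Monotone θ) : θ ∈ closure (ssuS n) := by
  have hp := Real.pi_pos
  have hlim : Filter.Tendsto (fun t : ℝ => (1 - t) • θ + t • ssuR n 0)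
      (nhdsWithin 0 (Set.Ioo 0 1)) (nhds θ) := by
    have : Continuous (fun t : ℝ => (1 - t) • θ + t • ssuR n 0) := by fun_prop
    have := (this.tendsto 0).mono_left (nhdsWithin_le_nhds (s := Set.Ioo (0 : ℝ) 1))
    simpa using this
  have hne : (nhdsWithin (0 : ℝ) (Set.Ioo 0 1)).NeBot := by
    rw [← mem_closure_iff_nhdsWithin_neBot, closure_Ioo zero_ne_one]
    simp
  refine mem_closure_of_tendsto hlim ?_
  filter_upwards [self_mem_nhdsWithin] with t ht
  obtain ⟨hr1, hr2⟩ := ssuR_mem n 0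
  constructor
  · intro i j hij
    have a1 := h2 hij.le
    have a2 := hr1 hij
    simp only [Pi.add_apply, Pi.smul_apply, smul_eq_mul]
    nlinarith [mul_pos ht.1 (sub_pos.2 a2), mul_nonneg (sub_pos.2 ht.2).le (sub_nonneg.2 a1)]
  · intro i j
    have a1 : θ i < θ j + 2 * Real.pi := by linarith [(h1 i).2, (h1 j).1]
    have a2 := hr2 i j
    simp only [Pi.add_apply, Pi.smul_apply, smul_eq_mul]
    nlinarith [mul_pos ht.1 (sub_pos.2 a2), mul_pos (sub_pos.2 ht.2) (sub_pos.2 a1)]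

lemma ssu_exp_rot {k : ℕ} (j : Fin (k + 1)) :
    Complex.exp (ssuR (k + 1) 1 j * Complex.I) =
      Complex.exp (ssuR (k + 1) 0 (j + 1) * Complex.I) := by
  have hk : ((k : ℂ) + 1) ≠ 0 := by exact_mod_cast k.succ_ne_zero
  rcases Fin.eq_castSucc_or_eq_last j with ⟨i, rfl⟩ | rfl
  · rw [Fin.coeSucc_eq_succ]
    simp [ssuR]
  · rw [Fin.last_add_one, Complex.exp_eq_exp_iff_exists_int]
    refine ⟨1, ?_⟩
    simp only [ssuR]
    push_cast
    simp
    field_simp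

lemma ssu_rot {k : ℕ} : ∃ P, ssuMk P (ssuR (k + 1) 0) = ssuMk ⟨1, by simp⟩ (ssuR (k + 1) 1) := by
  let σ : Fin (k + 1) ≃ Fin (k + 1) := Equiv.addRight 1
  refine ⟨⟨(1 : Matrix (Fin (k + 1)) (Fin (k + 1)) ℂ).submatrix σ id, ?_⟩, ?_⟩
  · rw [conjTranspose_submatrix]
    have := submatrix_mul_equiv (1 : Matrix (Fin (k + 1)) (Fin (k + 1)) ℂ) 1ᴴ σ (Equiv.refl _) σ
    rw [Equiv.coe_refl] at this
    rw [this]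
    simp
  · apply Subtype.ext
    change (1 : Matrix (Fin (k + 1)) (Fin (k + 1)) ℂ).submatrix σ id * diagonal _ *
      ((1 : Matrix (Fin (k + 1)) (Fin (k + 1)) ℂ).submatrix σ id)ᴴ = 1 * diagonal _ * 1ᴴ
    rw [conjTranspose_submatrix]
    have e1 := fun (A B : Matrix (Fin (k + 1)) (Fin (k + 1)) ℂ) (f g : Fin (k + 1) → Fin (k + 1)) =>
      submatrix_mul_equiv A B f (Equiv.refl _) g
    simp only [Equiv.coe_refl] at e1
    conv_lhs => rw [← submatrix_id_id (diagonal _)]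
    rw [e1, e1]
    simp only [one_mul, conjTranspose_one, mul_one]
    rw [submatrix_diagonal_equiv]
    congr 1
    funext j
    exact (ssu_exp_rot j).symm

lemma ssu_main {k m : ℕ}
    (φ : {X : Matrix (Fin (k + 1)) (Fin (k + 1)) ℂ // X * X.conjTranspose = 1} →
      Matrix (Fin m) (Fin m) ℂ) (hφ : Continuous φ)
    (hs : ∀ X, spectrum ℂ (φ X) ⊆ spectrum ℂ X.val) :
    ∃ a : ℕ, m = (k + 1) * a ∧ ∀ X, (φ X).charpoly = X.val.charpoly ^ a := by
  have hpc : PreconnectedSpace (ssuS (k + 1)) :=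
    Subtype.preconnectedSpace (ssuS_convex (k + 1)).isPreconnected
  obtain ⟨a, ha⟩ := ssu_mult_const
    (T := ssuS (k + 1) × {X : Matrix (Fin (k + 1)) (Fin (k + 1)) ℂ // X * X.conjTranspose = 1})
    (f := fun p => φ (ssuMk p.2 p.1.1))
    (l := fun p j => Complex.exp (p.1.1 j * Complex.I))
    (hφ.comp (ssuMk_continuous.comp (f := fun p : ssuS (k + 1) ×
      {X : Matrix (Fin (k + 1)) (Fin (k + 1)) ℂ // X * X.conjTranspose = 1} =>
        (p.1.1, p.2)) (by fun_prop)))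
    (by
      refine continuous_pi fun j => ?_
      have h : Continuous fun p : ssuS (k + 1) ×
          {X : Matrix (Fin (k + 1)) (Fin (k + 1)) ℂ // X * X.conjTranspose = 1} => p.1.1 j :=
        (continuous_apply j).comp (continuous_subtype_val.comp continuous_fst)
      exact ((Complex.continuous_ofReal.comp h).mul continuous_const).cexp)
    (fun p => ssuS_inj p.1.2)
    (fun p => (hs _).trans (ssuMk_spectrum _ _).subset)
  have hstep : ∀ j, a (j + 1) = a j := by
    intro j
    obtain ⟨P, hP⟩ := ssu_rot (k := k)
    have h0 := ha (⟨ssuR (k + 1) 0, ssuR_mem _ _⟩, P)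
    have h1 := ha (⟨ssuR (k + 1) 1, ssuR_mem _ _⟩, ⟨1, by simp⟩)
    dsimp only at h0 h1
    rw [hP, h1] at h0
    have r1 := ssu_rootMult _ (ssuS_inj (ssuR_mem (k + 1) 1)) a j
    have r0 := ssu_rootMult _ (ssuS_inj (ssuR_mem (k + 1) 0)) a (j + 1)
    rw [← r0, ← r1, h0, ssu_exp_rot j]
  have hconst : ∀ j, a j = a 0 := by
    intro j
    induction j using Fin.induction with
    | zero => rfl
    | succ i ih => rw [← Fin.coeSucc_eq_succ, hstep, ih]
  refine ⟨a 0, ?_, ?_⟩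
  · have h0 := ha (⟨ssuR (k + 1) 0, ssuR_mem _ _⟩, ⟨1, by simp⟩)
    have h1 := congrArg Polynomial.natDegree h0
    rw [Matrix.charpoly_natDegree_eq_dim, Fintype.card_fin, Polynomial.natDegree_prod_of_monic _ _
      (fun j _ => (Polynomial.monic_X_sub_C _).pow _)] at h1
    simpa [hconst] using h1
  · intro X
    obtain ⟨V, θ, h1, h2, rfl⟩ := ssu_diag X
    have hcl := ssu_isClosed (f := fun θ : Fin (k + 1) → ℝ => φ (ssuMk V θ))
      (l := fun θ j => Complex.exp (θ j * Complex.I))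
      (hφ.comp (ssuMk_continuous.comp (f := fun θ : Fin (k + 1) → ℝ => (θ, V)) (by fun_prop)))
      (by fun_prop) a
    have hsub := closure_minimal (s := ssuS (k + 1)) (fun θ hθ => ha (⟨θ, hθ⟩, V)) hcl
    have h3 := hsub (ssuS_closure h1 h2)
    have h4 : (φ (ssuMk V θ)).charpoly = _ := h3
    rw [h4, ssuMk_charpoly, ← Finset.prod_pow]
    simp only [hconst]

lemma ssu_exists (n a : ℕ) : ∃ φ :
        {X : Matrix (Fin n) (Fin n) ℂ // X * X.conjTranspose = 1} →
          Matrix (Fin (n * a)) (Fin (n * a)) ℂ,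
        Continuous φ ∧ ∀ X, spectrum ℂ (φ X) ⊆ spectrum ℂ X.val := by
  refine ⟨fun X => reindexAlgEquiv ℂ ℂ finProdFinEquiv (blockDiagonal fun _ : Fin a => X.1),
    ?_, ?_⟩
  · refine Continuous.matrix_reindex ?_ _ _
    refine Continuous.matrix_blockDiagonal ?_
    exact continuous_pi fun _ => continuous_subtype_val
  · intro X
    rw [AlgEquiv.spectrum_eq]
    intro x hx
    by_contra hx'
    rw [spectrum.notMem_iff] at hx'
    refine hx ?_
    rw [spectrum.mem_resolventSet_iff]
    have := (hx'.map (Matrix.blockDiagonalRingHom (Fin n) (Fin a) ℂ |>.comp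
      (Pi.constRingHom (Fin a) (Matrix (Fin n) (Fin n) ℂ))))
    convert this using 1
    ext ⟨i, i'⟩ ⟨j, j'⟩
    simp [blockDiagonal_apply, Matrix.algebraMap_matrix_apply, Prod.ext_iff]
    split_ifs <;> simp_all

theorem exists_continuous_spectrum_shrinker_Un_iff (n m : ℕ) (hn : 1 ≤ n) (hm : 1 ≤ m) :
    ((∃ φ : {X : Matrix (Fin n) (Fin n) ℂ // X * X.conjTranspose = 1} →
          Matrix (Fin m) (Fin m) ℂ,
        Continuous φ ∧ ∀ X, spectrum ℂ (φ X) ⊆ spectrum ℂ X.val) ↔ n ∣ m) ∧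
    (n ∣ m → ∀ φ : {X : Matrix (Fin n) (Fin n) ℂ // X * X.conjTranspose = 1} →
          Matrix (Fin m) (Fin m) ℂ,
        Continuous φ → (∀ X, spectrum ℂ (φ X) ⊆ spectrum ℂ X.val) →
        ∀ X, (φ X).charpoly = X.val.charpoly ^ (m / n) ∧
          spectrum ℂ (φ X) = spectrum ℂ X.val) := by
  obtain ⟨k, rfl⟩ : ∃ k, n = k + 1 := ⟨n - 1, by omega⟩
  refine ⟨⟨?_, ?_⟩, ?_⟩
  · rintro ⟨φ, hφ, hs⟩
    obtain ⟨a, ha, -⟩ := ssu_main φ hφ hs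
    exact ⟨a, ha⟩
  · rintro ⟨a, rfl⟩
    exact ssu_exists _ _
  · intro _ φ hφ hs X
    obtain ⟨a, ha, hX⟩ := ssu_main φ hφ hs
    have hdiv : m / (k + 1) = a := by
      rw [ha]; exact Nat.mul_div_cancel_left _ k.succ_pos
    have ha0 : a ≠ 0 := by
      rintro rfl
      omega
    rw [hdiv]
    refine ⟨hX X, ?_⟩
    ext x
    rw [Matrix.mem_spectrum_iff_isRoot_charpoly, Matrix.mem_spectrum_iff_isRoot_charpoly, hX X,
      Polynomial.IsRoot.def, Polynomial.IsRoot.def, Polynomial.eval_pow, pow_eq_zero_iff ha0]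
end

section
/- Let m, n ≥ 1 be integers and let N_n denote the set of normal n×n complex matrices (matrices X with X X* = X* X), topologized as a subspace of M_n. There exists a continuous spectrum-shrinking map φ : N_n → M_m if and only if n divides m; and when n divides m, every continuous spectrum-shrinking map φ : N_n → M_m satisfies k_{φ(X)} = (k_X)^{m/n} for all X ∈ N_n (in particular, sp(φ(X)) = sp(X) for all X). -/
open Matrix

namespace SpecShrink

open Polynomial in
lemma rootMult_prod {n : ℕ} (l : Fin n → ℂ) (hl : Function.Injective l) (p : Fin n → ℕ)
    (i : Fin n) : (∏ k, (X - C (l k)) ^ p k).rootMultiplicity (l i) = p i := by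
  classical
  rw [← count_roots, roots_prod _ _ (Finset.prod_ne_zero_iff.2 fun k _ =>
    pow_ne_zero _ (X_sub_C_ne_zero _))]
  simp only [roots_pow, roots_X_sub_C, Multiset.count_bind, Multiset.count_nsmul,
    Multiset.count_singleton, hl.eq_iff]
  change ∑ k, p k * (if i = k then 1 else 0) = p i
  simp

open Polynomial in
lemma eq_prod {n : ℕ} (l : Fin n → ℂ) (hl : Function.Injective l) (f : ℂ[X]) (hf : f.Monic)
    (h : ∀ x, f.IsRoot x → x ∈ Set.range l) :
    f = ∏ k, (X - C (l k)) ^ (f.rootMultiplicity (l k)) := by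
  classical
  have h1 : f = (f.roots.map (X - C ·)).prod :=
    (IsAlgClosed.splits f).eq_prod_roots_of_monic hf
  conv_lhs => rw [h1]
  rw [Finset.prod_multiset_map_count]
  have h2 : f.roots.toFinset ⊆ Finset.univ.image l := by
    intro x hx
    rw [Multiset.mem_toFinset, mem_roots hf.ne_zero] at hx
    obtain ⟨k, rfl⟩ := h x hx
    simp
  rw [Finset.prod_subset h2, Finset.prod_image (fun a _ b _ hab => hl hab)]
  · simp
  · intro x _ hx
    rw [Multiset.mem_toFinset, ← Multiset.count_eq_zero] at hx
    simp [hx]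

open Polynomial in
lemma const_mult {T : Type*} [TopologicalSpace T] [PreconnectedSpace T] {n m : ℕ}
    (f : T → Matrix (Fin m) (Fin m) ℂ) (hf : Continuous f) (l : T → Fin n → ℂ)
    (hl : Continuous l) (hinj : ∀ t, Function.Injective (l t))
    (hsp : ∀ t, spectrum ℂ (f t) ⊆ Set.range (l t)) :
    ∀ s t k, (f s).charpoly.rootMultiplicity (l s k) = (f t).charpoly.rootMultiplicity (l t k) := by
  have hprod : ∀ t, (f t).charpoly =
      ∏ k, (X - C (l t k)) ^ ((f t).charpoly.rootMultiplicity (l t k)) := fun t =>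
    eq_prod (l t) (hinj t) _ (Matrix.charpoly_monic _) fun x hx =>
      hsp t (Matrix.mem_spectrum_iff_isRoot_charpoly.2 hx)
  have hle : ∀ t k, (f t).charpoly.rootMultiplicity (l t k) < m + 1 := by
    intro t k
    rw [Nat.lt_succ_iff]
    have h1 := (f t).charpoly.card_roots'
    rw [Matrix.charpoly_natDegree_eq_dim, Fintype.card_fin] at h1
    rw [← count_roots]
    exact (Multiset.count_le_card _ _).trans h1
  let P : T → (Fin n → Fin (m + 1)) := fun t k => ⟨_, hle t k⟩
  have hfib : ∀ q : Fin n → Fin (m + 1), IsClosed (P ⁻¹' {q}) := by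
    intro q
    have : P ⁻¹' {q} = ⋂ x : ℂ, {t | (Matrix.scalar (Fin m) x - f t).det =
        ∏ k, (x - l t k) ^ (q k : ℕ)} := by
      ext t
      simp only [Set.mem_preimage, Set.mem_singleton_iff, Set.mem_iInter, Set.mem_ofPred_eq]
      constructor
      · rintro rfl x
        rw [← Matrix.eval_charpoly, hprod t]
        simp only [eval_prod, eval_pow, eval_sub, eval_X, eval_C, P]
      · intro h
        have : (f t).charpoly = ∏ k, (X - C (l t k)) ^ (q k : ℕ) := by
          apply Polynomial.funext
          intro x
          rw [Matrix.eval_charpoly, h x]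
          simp [eval_prod]
        funext k
        apply Fin.ext
        simp only [P]
        rw [this, rootMult_prod _ (hinj t)]
    rw [this]
    refine isClosed_iInter fun x => isClosed_eq ?_ ?_
    · exact (continuous_const.sub hf).matrix_det
    · fun_prop
  have hloc : IsLocallyConstant P := by
    intro s
    rw [← isClosed_compl_iff, ← Set.preimage_compl, ← Set.biUnion_preimage_singleton]
    exact (Set.toFinite _).isClosed_biUnion fun q _ => hfib q
  intro s t k
  have := congrFun (hloc.apply_eq_of_preconnectedSpace s t) k
  exact congrArg Fin.val this

/-- The normal matrices. -/
abbrev Nrm (n : ℕ) := {X : Matrix (Fin n) (Fin n) ℂ //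
          X * X.conjTranspose = X.conjTranspose * X}

lemma normal_UDU {n : ℕ} (U : Matrix (Fin n) (Fin n) ℂ) (hU : Uᴴ * U = 1) (l : Fin n → ℂ) :
    (U * diagonal l * Uᴴ) * (U * diagonal l * Uᴴ)ᴴ = (U * diagonal l * Uᴴ)ᴴ * (U * diagonal l * Uᴴ) := by
  simp only [conjTranspose_mul, conjTranspose_conjTranspose, diagonal_conjTranspose]
  have e : ∀ a b : Fin n → ℂ, (U * diagonal a * Uᴴ) * (U * (diagonal b * Uᴴ)) =
      U * diagonal (fun i => a i * b i) * Uᴴ := by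
    intro a b
    calc _ = U * diagonal a * (Uᴴ * U) * (diagonal b * Uᴴ) := by noncomm_ring
      _ = U * (diagonal a * diagonal b) * Uᴴ := by rw [hU]; noncomm_ring
      _ = _ := by rw [diagonal_mul_diagonal]
  rw [e, Matrix.mul_assoc U (diagonal l) Uᴴ, ← Matrix.mul_assoc U _ Uᴴ, e]
  simp only [mul_comm]

/-- U D U* as a normal matrix. -/
def mkN {n : ℕ} (U : Matrix (Fin n) (Fin n) ℂ) (hU : Uᴴ * U = 1) (l : Fin n → ℂ) : Nrm n :=
  ⟨U * diagonal l * Uᴴ, normal_UDU U hU l⟩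

open Polynomial in
lemma charpoly_mkN {n : ℕ} (U : Matrix (Fin n) (Fin n) ℂ) (hU : Uᴴ * U = 1) (l : Fin n → ℂ) :
    (mkN U hU l).val.charpoly = ∏ k, (X - C (l k)) := by
  rw [mkN, Matrix.charpoly_mul_comm, ← Matrix.mul_assoc, hU, Matrix.one_mul, charpoly_diagonal]

lemma spectrum_mkN {n : ℕ} (U : Matrix (Fin n) (Fin n) ℂ) (hU : Uᴴ * U = 1) (l : Fin n → ℂ) :
    spectrum ℂ (mkN U hU l).val = Set.range l := by
  ext x
  rw [Matrix.mem_spectrum_iff_isRoot_charpoly, charpoly_mkN, Polynomial.IsRoot,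
    Polynomial.eval_prod, Finset.prod_eq_zero_iff]
  simp [sub_eq_zero, eq_comm]

lemma finite_bad {n : ℕ} (l μ : Fin n → ℂ) (z₀ : ℂ)
    (h0 : Function.Injective (fun k => l k + z₀ * (μ k - l k))) :
    {z : ℂ | ¬ Function.Injective (fun k => l k + z * (μ k - l k))}.Finite := by
  have : {z : ℂ | ¬ Function.Injective (fun k => l k + z * (μ k - l k))} ⊆
      ⋃ i : Fin n, ⋃ j : Fin n, {z | i ≠ j ∧ l i + z * (μ i - l i) = l j + z * (μ j - l j)} := by
    intro z hz
    simp only [Set.mem_ofPred_eq, Function.Injective, not_forall] at hz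
    obtain ⟨i, j, h1, h2⟩ := hz
    simp only [Set.mem_iUnion]
    exact ⟨i, j, h2, h1⟩
  refine Set.Finite.subset ?_ this
  refine Set.finite_iUnion fun i => Set.finite_iUnion fun j => Set.Subsingleton.finite ?_
  rintro z ⟨hij, hz⟩ w ⟨-, hw⟩
  by_contra hne
  have hd : (μ i - l i) - (μ j - l j) = 0 := by
    have : (z - w) * ((μ i - l i) - (μ j - l j)) = 0 := by linear_combination hz - hw
    exact (mul_eq_zero.1 this).resolve_left (sub_ne_zero.2 hne)
  exact hij (h0 (by linear_combination hz + (z₀ - z) * hd))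

variable {n m : ℕ} (φ : Nrm n → Matrix (Fin m) (Fin m) ℂ)

lemma mult_config (hφ : Continuous φ) (hsp : ∀ X, spectrum ℂ (φ X) ⊆ spectrum ℂ X.val)
    (U : Matrix (Fin n) (Fin n) ℂ) (hU : Uᴴ * U = 1) (l μ : Fin n → ℂ)
    (hl : Function.Injective l) (hμ : Function.Injective μ) (k : Fin n) :
    (φ (mkN U hU l)).charpoly.rootMultiplicity (l k) =
      (φ (mkN U hU μ)).charpoly.rootMultiplicity (μ k) := by
  have hfin := finite_bad l μ 0 (by simpa using hl)
  have hconn := hfin.countable.isConnected_compl_of_one_lt_rank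
    (by rw [Complex.rank_real_complex]; norm_num)
  set S := {z : ℂ | ¬ Function.Injective (fun k => l k + z * (μ k - l k))}ᶜ with hS
  have : PreconnectedSpace S := isPreconnected_iff_preconnectedSpace.1 hconn.isPreconnected
  have hc : Continuous (fun z : S => fun k => l k + (z : ℂ) * (μ k - l k)) := by fun_prop
  have key := const_mult (T := S) (fun z => φ (mkN U hU (fun k => l k + z * (μ k - l k))))
    (hφ.comp (Continuous.subtype_mk
      ((continuous_const.mul hc.matrix_diagonal).mul continuous_const) _))
    (fun z k => l k + z * (μ k - l k)) hc (fun z => not_not.1 z.2)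
    (fun z => by rw [← spectrum_mkN U hU]; exact hsp _)
  have h0 : (0 : ℂ) ∈ S := by simpa [hS] using hl
  have h1 : (1 : ℂ) ∈ S := by simpa [hS] using hμ
  have := key ⟨0, h0⟩ ⟨1, h1⟩ k
  simpa using this

/-- path of unitaries -/
noncomputable def W (S : Matrix (Fin n) (Fin n) ℂ) (z : ℂ) : Matrix (Fin n) (Fin n) ℂ :=
  (1/2 : ℂ) • (1 + S) + (z/2) • (1 - S)

lemma W_unitary (S : Matrix (Fin n) (Fin n) ℂ) (hS : Sᴴ = S) (hSS : S * S = 1) (z : ℂ)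
    (hz : ‖z‖ = 1) : (W S z)ᴴ * W S z = 1 := by
  have hz' : star z * z = 1 := by
    have := Complex.conj_mul' z
    rw [hz] at this
    simpa using this
  have hW : (W S z)ᴴ = W S (star z) := by
    simp [W, hS]
  rw [hW, W, W]
  simp only [add_mul, mul_add, smul_mul_assoc, mul_smul_comm, sub_mul, mul_sub, one_mul, mul_one,
    hSS, smul_add, smul_sub, smul_smul]
  match_scalars
  · linear_combination (1/2) * hz'
  · linear_combination (-1/2) * hz'

lemma mult_swap (hφ : Continuous φ) (hsp : ∀ X, spectrum ℂ (φ X) ⊆ spectrum ℂ X.val)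
    (U : Matrix (Fin n) (Fin n) ℂ) (hU : Uᴴ * U = 1) (l : Fin n → ℂ)
    (hl : Function.Injective l) (i j k : Fin n) :
    (φ (mkN U hU l)).charpoly.rootMultiplicity (l k) =
      (φ (mkN U hU (l ∘ Equiv.swap i j))).charpoly.rootMultiplicity (l k) := by
  set S : Matrix (Fin n) (Fin n) ℂ := (Equiv.swap i j).toPEquiv.toMatrix with hSdef
  have hS : Sᴴ = S := by
    ext a b
    simp only [hSdef, conjTranspose_apply, PEquiv.toMatrix_apply, Equiv.toPEquiv_apply,
      Option.mem_def, Option.some.injEq]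
    have : Equiv.swap i j b = a ↔ Equiv.swap i j a = b := by
      rw [← Equiv.eq_symm_apply, Equiv.symm_swap, eq_comm]
    simp [this]
  have hSS : S * S = 1 := by
    rw [hSdef, ← PEquiv.toMatrix_trans, ← Equiv.toPEquiv_trans]
    have : (Equiv.swap i j).trans (Equiv.swap i j) = Equiv.refl _ := by ext; simp
    rw [this]; simp
  have hSD : S * diagonal l * Sᴴ = diagonal (l ∘ Equiv.swap i j) := by
    have : S * diagonal l = diagonal (l ∘ Equiv.swap i j) * S := by
      ext a b
      simp only [mul_diagonal, diagonal_mul, hSdef, PEquiv.toMatrix_apply, Equiv.toPEquiv_apply,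
      Option.mem_def, Option.some.injEq, Function.comp]
      split_ifs with h
      · rw [h]; ring
      · simp
    rw [this, hS, Matrix.mul_assoc, hSS, Matrix.mul_one]
  have hUW : ∀ z : Metric.sphere (0 : ℂ) 1, (U * W S z)ᴴ * (U * W S z) = 1 := by
    intro z
    rw [conjTranspose_mul, Matrix.mul_assoc, ← Matrix.mul_assoc Uᴴ, hU, Matrix.one_mul]
    exact W_unitary S hS hSS _ (by simp)
  have : PreconnectedSpace (Metric.sphere (0 : ℂ) 1) := isPreconnected_iff_preconnectedSpace.1
    (isPreconnected_sphere (by rw [Complex.rank_real_complex]; norm_num) _ _)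
  have hWc : Continuous (fun z : Metric.sphere (0 : ℂ) 1 => W S z) := by
    unfold W; fun_prop
  have key := const_mult (T := Metric.sphere (0 : ℂ) 1) (fun z => φ (mkN (U * W S z) (hUW z) l))
    (hφ.comp (Continuous.subtype_mk
      (((continuous_const.mul hWc).mul continuous_const).mul
        (continuous_const.mul hWc).matrix_conjTranspose) _))
    (fun _ => l) continuous_const (fun _ => hl)
    (fun z => by rw [← spectrum_mkN (U * W S z) (hUW z)]; exact hsp _)
  have h := key ⟨1, by simp⟩ ⟨-1, by simp⟩ k
  have e1 : mkN (U * W S 1) (hUW ⟨1, by simp⟩) l = mkN U hU l := by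
    apply Subtype.ext
    have : W S 1 = 1 := by
      unfold W; match_scalars <;> norm_num
    simp [mkN, this]
  have e2 : mkN (U * W S (-1)) (hUW ⟨-1, by simp⟩) l = mkN U hU (l ∘ Equiv.swap i j) := by
    apply Subtype.ext
    have : W S (-1) = S := by
      unfold W; match_scalars <;> norm_num
    simp only [mkN, this]
    rw [← hSD, conjTranspose_mul]
    noncomm_ring
  simp only [e1, e2] at h
  exact h

lemma charpoly_inj (hn : 1 ≤ n) (hφ : Continuous φ)
    (hsp : ∀ X, spectrum ℂ (φ X) ⊆ spectrum ℂ X.val)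
    (U : Matrix (Fin n) (Fin n) ℂ) (hU : Uᴴ * U = 1) (l : Fin n → ℂ)
    (hl : Function.Injective l) :
    ∃ p, m = n * p ∧ (φ (mkN U hU l)).charpoly = (mkN U hU l).val.charpoly ^ p := by
  set f := (φ (mkN U hU l)).charpoly with hf
  have hmult : ∀ i j, f.rootMultiplicity (l i) = f.rootMultiplicity (l j) := by
    intro i j
    have h1 := mult_config φ hφ hsp U hU l (l ∘ Equiv.swap i j) hl
      (hl.comp (Equiv.injective _)) i
    have h2 := mult_swap φ hφ hsp U hU l hl i j j
    simp only [Function.comp, Equiv.swap_apply_left] at h1 h2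
    rw [hf, h1, h2]
  let i₀ : Fin n := ⟨0, hn⟩
  have h := eq_prod l hl f (Matrix.charpoly_monic _) fun x hx => by
    rw [← spectrum_mkN U hU l]
    exact hsp _ (Matrix.mem_spectrum_iff_isRoot_charpoly.2 hx)
  have h2 : f = (mkN U hU l).val.charpoly ^ (f.rootMultiplicity (l i₀)) := by
    rw [charpoly_mkN, ← Finset.prod_pow]
    conv_lhs => rw [h]
    exact Finset.prod_congr rfl fun k _ => by rw [hmult k i₀]
  refine ⟨f.rootMultiplicity (l i₀), ?_, h2⟩
  have h3 := congrArg Polynomial.natDegree h2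
  rw [Polynomial.natDegree_pow, hf, Matrix.charpoly_natDegree_eq_dim,
    Matrix.charpoly_natDegree_eq_dim] at h3
  simp only [Fintype.card_fin] at h3
  rw [h3, mul_comm]

lemma charpoly_all (hn : 1 ≤ n) (hφ : Continuous φ)
    (hsp : ∀ X, spectrum ℂ (φ X) ⊆ spectrum ℂ X.val)
    (U : Matrix (Fin n) (Fin n) ℂ) (hU : Uᴴ * U = 1) (l : Fin n → ℂ) :
    (φ (mkN U hU l)).charpoly = (mkN U hU l).val.charpoly ^ (m / n) := by
  let μ : Fin n → ℂ := fun k => (k : ℕ)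
  have hμ : Function.Injective μ := fun a b h => Fin.ext (Nat.cast_injective h)
  have hfin := finite_bad l μ 1 (by simpa using hμ)
  have hd := hfin.countable.dense_compl ℂ
  have hc : Continuous (fun z : ℂ => fun k => l k + (z : ℂ) * (μ k - l k)) := by fun_prop
  have hc2 : Continuous (fun z : ℂ => mkN U hU (fun k => l k + (z : ℂ) * (μ k - l k))) :=
    Continuous.subtype_mk ((continuous_const.mul hc.matrix_diagonal).mul continuous_const) _
  apply Polynomial.funext
  intro x
  have := Continuous.ext_on hd
    (f := fun z => (φ (mkN U hU (fun k => l k + z * (μ k - l k)))).charpoly.eval x)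
    (g := fun z => ((mkN U hU (fun k => l k + z * (μ k - l k))).val.charpoly ^ (m / n)).eval x)
    (by
      simp only [Matrix.eval_charpoly]
      exact (continuous_const.sub (hφ.comp hc2)).matrix_det)
    (by
      simp only [Polynomial.eval_pow, Matrix.eval_charpoly]
      exact ((continuous_const.sub (continuous_subtype_val.comp hc2)).matrix_det).pow _)
    (by
      intro z hz
      obtain ⟨p, hp, h⟩ := charpoly_inj φ hn hφ hsp U hU _ (not_not.1 hz)
      have : m / n = p := by rw [hp]; exact Nat.mul_div_cancel_left _ hn
      simp only [h, this])
  simpa using congrFun this 0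

lemma exists_mkN (X : Nrm n) : ∃ U hU l, X = mkN U hU l := by
  classical
  obtain ⟨X, hX⟩ := X
  let A : Matrix (Fin n) (Fin n) ℂ := (1/2 : ℂ) • (X + Xᴴ)
  let B : Matrix (Fin n) (Fin n) ℂ := (-Complex.I/2 : ℂ) • (X - Xᴴ)
  have hA : A.IsHermitian := by
    simp [A, IsHermitian, add_comm]
  have hB : B.IsHermitian := by
    simp only [B, IsHermitian, conjTranspose_smul, conjTranspose_sub, conjTranspose_conjTranspose]
    have : star (-Complex.I / 2) = Complex.I / 2 := by simp
    rw [this]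
    module
  have hAB : Commute A B := by
    change A * B = B * A
    simp only [A, B, smul_mul_assoc, mul_smul_comm, add_mul, mul_add, sub_mul, mul_sub, hX]
    module
  have hXAB : X = A + Complex.I • B := by
    simp only [A, B, smul_smul]
    have : Complex.I * (-Complex.I / 2) = 1/2 := by
      linear_combination (-1/2) * Complex.I_mul_I
    rw [this]
    module
  let TA := toEuclideanLin A
  let TB := toEuclideanLin B
  have hTA : TA.IsSymmetric := isHermitian_iff_isSymmetric.1 hA
  have hTB : TB.IsSymmetric := isHermitian_iff_isSymmetric.1 hB
  have hT : Commute TA TB := by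
    apply LinearMap.ext
    intro v
    apply (WithLp.ofLp_injective 2)
    simp only [TA, TB, Module.End.mul_apply, ofLp_toEuclideanLin_apply, mulVec_mulVec]
    rw [hAB.eq]
  let V : ℂ × ℂ → Submodule ℂ (EuclideanSpace ℂ (Fin n)) := fun i =>
    Module.End.eigenspace TA i.2 ⊓ Module.End.eigenspace TB i.1
  have hV : OrthogonalFamily ℂ (fun i => V i) fun i => (V i).subtypeₗᵢ :=
    LinearMap.IsSymmetric.orthogonalFamily_eigenspace_inf_eigenspace hTA hTB
  have hVtop : iSup V = ⊤ :=
    (LinearMap.IsSymmetric.directSum_isInternal_of_commute hTA hTB hT).submodule_iSup_eq_top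
  let ι := Σ i : ℂ × ℂ, Fin (Module.finrank ℂ (V i))
  let v : ι → EuclideanSpace ℂ (Fin n) := fun a => (stdOrthonormalBasis ℂ (V a.1) a.2 : V a.1)
  have hv : Orthonormal ℂ v := hV.orthonormal_sigma_orthonormal
    (v_family := fun i => stdOrthonormalBasis ℂ (V i))
    (fun i => (stdOrthonormalBasis ℂ (V i)).orthonormal)
  have hspan : ⊤ ≤ Submodule.span ℂ (Set.range v) := by
    rw [← hVtop]
    refine iSup_le fun i => ?_
    have h1 := (stdOrthonormalBasis ℂ (V i)).toBasis.span_eq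
    have h2 := congrArg (Submodule.map (V i).subtype) h1
    rw [Submodule.map_span, Submodule.map_subtype_top] at h2
    rw [← h2]
    apply Submodule.span_mono
    rintro _ ⟨_, ⟨a, rfl⟩, rfl⟩
    exact ⟨⟨i, a⟩, by simp [v]⟩
  have : Finite ι := hv.linearIndependent.finite_of_isNoetherian
  have : Fintype ι := Fintype.ofFinite ι
  let b₀ := OrthonormalBasis.mk hv hspan
  have hcard : Fintype.card ι = n := by
    rw [← Module.finrank_eq_card_basis b₀.toBasis, finrank_euclideanSpace_fin]
  let e : ι ≃ Fin n := Fintype.equivFinOfCardEq hcard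
  let b := b₀.reindex e
  let l : Fin n → ℂ := fun k => (e.symm k).1.2 + Complex.I * (e.symm k).1.1
  have hb : ∀ k, X *ᵥ (b k).ofLp = l k • (b k).ofLp := by
    intro k
    have hmem : b k ∈ V (e.symm k).1 := by
      have : b k = v (e.symm k) := by simp [b, b₀]
      rw [this]
      exact Subtype.coe_prop _
    have h1 := congrArg WithLp.ofLp (Module.End.mem_eigenspace_iff.1 hmem.1)
    have h2 := congrArg WithLp.ofLp (Module.End.mem_eigenspace_iff.1 hmem.2)
    simp only [TA, TB, ofLp_toEuclideanLin_apply, WithLp.ofLp_smul] at h1 h2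
    have h3 : X *ᵥ (b k).ofLp = A *ᵥ (b k).ofLp + Complex.I • (B *ᵥ (b k).ofLp) := by
      rw [← smul_mulVec, ← add_mulVec, ← hXAB]
    rw [h3, h1, h2]
    simp only [l]
    module
  let U : Matrix (Fin n) (Fin n) ℂ := Matrix.of fun r k => (b k).ofLp r
  have hU : Uᴴ * U = 1 := by
    ext i j
    have := orthonormal_iff_ite.1 b.orthonormal i j
    rw [one_apply, ← this]
    simp [U, mul_apply, PiLp.inner_apply, mul_comm]
  have hXU : X * U = U * diagonal l := by
    ext r k
    have := congrFun (hb k) r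
    rw [mul_diagonal]
    simp only [Pi.smul_apply, smul_eq_mul] at this
    rw [mul_comm]
    exact this
  refine ⟨U, hU, l, Subtype.ext ?_⟩
  simp only [mkN]
  rw [← hXU, Matrix.mul_assoc, mul_eq_one_comm.1 hU, Matrix.mul_one]

lemma exists_map (hn : 1 ≤ n) (h : n ∣ m) : ∃ φ : Nrm n → Matrix (Fin m) (Fin m) ℂ,
    Continuous φ ∧ ∀ X, spectrum ℂ (φ X) ⊆ spectrum ℂ X.val := by
  obtain ⟨p, rfl⟩ := h
  let e : Fin n × Fin p ≃ Fin (n * p) := finProdFinEquiv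
  refine ⟨fun X => (blockDiagonal fun _ : Fin p => X.val).submatrix e.symm e.symm, ?_, ?_⟩
  · exact ((continuous_pi fun _ => continuous_subtype_val).matrix_blockDiagonal).matrix_submatrix _ _
  · intro X x hx
    by_contra hx'
    rw [spectrum.notMem_iff] at hx'
    apply hx
    rw [resolventSet, Set.mem_ofPred_eq]
    have h1 := ((hx'.map (Pi.constRingHom (Fin p) (Matrix (Fin n) (Fin n) ℂ))).map
      (blockDiagonalRingHom (Fin n) (Fin p) ℂ)).map (reindexAlgEquiv ℂ ℂ e)
    convert h1 using 1
    rw [map_sub, map_sub, map_sub]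
    congr 1
    rw [Algebra.algebraMap_eq_smul_one, Algebra.algebraMap_eq_smul_one]
    ext a b
    obtain ⟨⟨a, a'⟩, rfl⟩ := e.surjective a
    obtain ⟨⟨b, b'⟩, rfl⟩ := e.surjective b
    simp only [reindexAlgEquiv_apply, reindex_apply, submatrix_apply, e.symm_apply_apply,
      blockDiagonalRingHom_apply, blockDiagonal_apply, Matrix.smul_apply, one_apply, e.injective.eq_iff,
      Prod.mk.injEq, Pi.constRingHom_apply, Function.const_apply]
    by_cases h1 : a = b <;> by_cases h2 : a' = b' <;> simp [h1, h2]

end SpecShrink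

open SpecShrink

/-- For integers `m, n ≥ 1`, there exists a continuous spectrum-shrinking
map `φ : N_n → M_m` (defined on the set of normal matrices) iff `n ∣ m`; and when `n ∣ m`,
every continuous spectrum-shrinking `φ : N_n → M_m` satisfies `k_{φ(X)} = (k_X)^(m/n)`
(in particular it preserves spectra). -/
theorem exists_continuous_spectrum_shrinker_normal_iff (n m : ℕ) (hn : 1 ≤ n) (hm : 1 ≤ m) :
    ((∃ φ : {X : Matrix (Fin n) (Fin n) ℂ //
          X * X.conjTranspose = X.conjTranspose * X} → Matrix (Fin m) (Fin m) ℂ,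
        Continuous φ ∧ ∀ X, spectrum ℂ (φ X) ⊆ spectrum ℂ X.val) ↔ n ∣ m) ∧
    (n ∣ m → ∀ φ : {X : Matrix (Fin n) (Fin n) ℂ //
          X * X.conjTranspose = X.conjTranspose * X} → Matrix (Fin m) (Fin m) ℂ,
        Continuous φ → (∀ X, spectrum ℂ (φ X) ⊆ spectrum ℂ X.val) →
        ∀ X, (φ X).charpoly = X.val.charpoly ^ (m / n) ∧
          spectrum ℂ (φ X) = spectrum ℂ X.val) := by
  classical
  have hfwd : ∀ φ : {X : Matrix (Fin n) (Fin n) ℂ //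
          X * X.conjTranspose = X.conjTranspose * X} → Matrix (Fin m) (Fin m) ℂ,
        Continuous φ → (∀ X, spectrum ℂ (φ X) ⊆ spectrum ℂ X.val) → n ∣ m := by
    intro φ hφ hsp
    obtain ⟨p, hp, -⟩ := charpoly_inj φ hn hφ hsp 1 (by simp) (fun k => ((k : ℕ) : ℂ))
      (fun a b h => Fin.ext (Nat.cast_injective h))
    exact ⟨p, hp⟩
  refine ⟨⟨fun ⟨φ, hφ, hsp⟩ => hfwd φ hφ hsp, fun h => exists_map hn h⟩, ?_⟩
  intro hdvd φ hφ hsp X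
  obtain ⟨U, hU, l, rfl⟩ := exists_mkN X
  have h := charpoly_all φ hn hφ hsp U hU l
  refine ⟨h, ?_⟩
  ext x
  rw [Matrix.mem_spectrum_iff_isRoot_charpoly, Matrix.mem_spectrum_iff_isRoot_charpoly, h]
  have h0 : m / n ≠ 0 := (Nat.div_pos (Nat.le_of_dvd hm hdvd) hn).ne'
  simp [Polynomial.IsRoot, h0]
end

section
/- Let n ≥ 1. A matrix X ∈ M_n has an open neighborhood U ⊆ M_n admitting a continuous eigenvalue selection (i.e., a continuous map φ : U → ℂ with φ(Y) ∈ sp(Y) for all Y ∈ U) if and only if X has at least one simple eigenvalue, i.e., an eigenvalue whose algebraic multiplicity (multiplicity as a root of the characteristic polynomial k_X) equals 1. -/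
open Matrix


lemma root_lemma (m : ℕ) (hm : 2 ≤ m) (r : ℝ) (hr : 0 < r) (ψ : ℂ → ℂ)
    (hc : ContinuousOn ψ (Metric.ball 0 r)) (h : ∀ z ∈ Metric.ball (0:ℂ) r, ψ z ^ m = z) : False := by
  have hm0 : (m:ℂ) ≠ 0 := by exact_mod_cast (by omega : m ≠ 0)
  let γ : ℝ → ℂ := fun θ => (r/2 : ℝ) * Complex.exp (θ * Complex.I)
  have hγ : ∀ θ, γ θ ∈ Metric.ball (0:ℂ) r := by
    intro θ
    simp only [γ, Metric.mem_ball, dist_zero_right, norm_mul, Complex.norm_exp_ofReal_mul_I,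
      Complex.norm_real, Real.norm_eq_abs, mul_one]
    rw [abs_of_pos (by linarith)]; linarith
  have hγc : Continuous γ := by fun_prop
  let f : ℝ → ℂ := fun θ => ψ (γ θ) * Complex.exp (-(θ / m * Complex.I))
  have hf : Continuous f := by
    refine Continuous.mul (hc.comp_continuous hγc hγ) (by fun_prop)
  have hfm : ∀ θ, f θ ^ m = (r/2 : ℝ) := by
    intro θ
    simp only [f, mul_pow, h _ (hγ θ), γ]
    rw [← Complex.exp_nat_mul, mul_assoc, ← Complex.exp_add]
    have : (θ * Complex.I + (m:ℂ) * -(θ / m * Complex.I)) = 0 := by field_simp; ring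
    rw [this]; simp
  have hfin : {z : ℂ | z ^ m = (r/2 : ℝ)}.Finite := by
    have := (Polynomial.nthRoots m (((r/2 : ℝ) : ℂ))).toFinset.finite_toSet
    refine this.subset ?_
    intro z hz
    simp only [Finset.mem_coe, Multiset.mem_toFinset]
    exact (Polynomial.mem_nthRoots (by omega)).2 hz
  have hsub : (Set.range f).Subsingleton :=
    hfin.countable.isTotallyDisconnected _ (by rintro _ ⟨θ, rfl⟩; exact hfm θ)
      (isPreconnected_range hf)
  have h1 : f 0 = f (2 * Real.pi) := hsub ⟨_, rfl⟩ ⟨_, rfl⟩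
  have hγe : γ (2 * Real.pi) = γ 0 := by simp [γ, Complex.exp_two_pi_mul_I]
  have hne : ψ (γ 0) ≠ 0 := by
    intro h0
    have := h _ (hγ 0)
    rw [h0, zero_pow (by omega)] at this
    simp only [γ, Complex.ofReal_zero, zero_mul, Complex.exp_zero, mul_one] at this
    have h5 : (0:ℝ) = r / 2 := by exact_mod_cast this
    linarith
  have h2 : Complex.exp (-((2 * Real.pi : ℝ) / m * Complex.I)) = 1 := by
    have : ψ (γ 0) * Complex.exp (-((2 * Real.pi : ℝ) / m * Complex.I)) = ψ (γ 0) * 1 := by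
      simp only [f, hγe] at h1
      rw [← h1]; simp
    exact mul_left_cancel₀ hne this
  rw [Complex.exp_neg, inv_eq_one] at h2
  have h3 := (Complex.isPrimitiveRoot_exp m (by omega)).ne_one (by omega)
  apply h3
  rw [← h2]; congr 1; push_cast; ring

noncomputable def kry {n : ℕ} (A : Matrix (Fin n) (Fin n) ℂ) (v : Fin n → ℂ) :
    Matrix (Fin n) (Fin n) ℂ := Matrix.of fun i j => (A ^ (j : ℕ) *ᵥ v) i

lemma kry_mulVec {n : ℕ} (A : Matrix (Fin n) (Fin n) ℂ) (v : Fin n → ℂ) (h : Polynomial ℂ)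
    (hd : ∀ k, n ≤ k → h.coeff k = 0) :
    (Polynomial.aeval A h) *ᵥ v = kry A v *ᵥ (fun j => h.coeff j) := by
  rcases Nat.eq_zero_or_pos n with rfl | hn
  · exact Subsingleton.elim _ _
  have hlt : h.natDegree < n := by
    by_contra hle
    have h0 := hd _ (not_lt.1 hle)
    rw [← Polynomial.leadingCoeff, Polynomial.leadingCoeff_eq_zero] at h0
    subst h0; simp at hle; omega
  rw [Polynomial.aeval_eq_sum_range' hlt, Finset.sum_range, Matrix.sum_mulVec]
  ext i
  simp only [Finset.sum_apply, smul_mulVec, Pi.smul_apply, smul_eq_mul, kry, mulVec, dotProduct, of_apply]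
  exact Finset.sum_congr rfl fun _ _ => mul_comm _ _

lemma cyc {n : ℕ} (hn : 1 ≤ n) (A : Matrix (Fin n) (Fin n) ℂ) (v : Fin n → ℂ)
    (hK : (kry A v).det ≠ 0) (q : Polynomial ℂ) (hq : ∀ k, n ≤ k → q.coeff k = 0) :
    ∃ R : Matrix (Fin n) (Fin n) ℂ, ∀ ζ μ : ℂ, μ ∈ spectrum ℂ (A + ζ • R) →
      A.charpoly.eval μ = ζ * q.eval μ := by
  have hu : IsUnit (kry A v).det := isUnit_iff_ne_zero.2 hK
  let l : Fin n := ⟨n - 1, by omega⟩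
  refine ⟨vecMulVec (Polynomial.aeval A q *ᵥ v) ((kry A v)⁻¹ l), ?_⟩
  intro ζ μ hμ
  rw [← Matrix.spectrum_toLin', ← Module.End.hasEigenvalue_iff_mem_spectrum] at hμ
  obtain ⟨u, hu1, hu0⟩ := hμ.exists_hasEigenvector
  rw [Module.End.mem_eigenspace_iff, toLin'_apply, add_mulVec, smul_mulVec, vecMulVec_mulVec] at hu1
  set c : Fin n → ℂ := (kry A v)⁻¹ *ᵥ u with hcdef
  have hcl : (kry A v)⁻¹ l ⬝ᵥ u = c l := rfl
  have hKc : kry A v *ᵥ c = u := by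
    rw [hcdef, mulVec_mulVec, Matrix.mul_nonsing_inv _ hu, one_mulVec]
  let g : Polynomial ℂ := ∑ j : Fin n, Polynomial.C (c j) * Polynomial.X ^ (j : ℕ)
  have hgc : ∀ j : Fin n, g.coeff j = c j := by
    intro j
    simp only [g, Polynomial.finsetSum_coeff, Polynomial.coeff_C_mul, Polynomial.coeff_X_pow]
    rw [Finset.sum_eq_single j]
    · simp
    · intro b _ hb
      rw [if_neg (fun h => hb (Fin.ext h.symm)), mul_zero]
    · simp
  have hgd : ∀ k, n ≤ k → g.coeff k = 0 := by
    intro k hk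
    simp only [g, Polynomial.finsetSum_coeff, Polynomial.coeff_C_mul, Polynomial.coeff_X_pow]
    refine Finset.sum_eq_zero fun b _ => ?_
    rw [if_neg (by have := b.2; omega), mul_zero]
  have hgu : Polynomial.aeval A g *ᵥ v = u := by
    rw [kry_mulVec A v g hgd]
    simp only [hgc]; exact hKc
  let h : Polynomial ℂ := (Polynomial.X - Polynomial.C μ) * g + Polynomial.C (ζ * c l) * q
    - Polynomial.C (c l) * A.charpoly
  have hpd : A.charpoly.natDegree = n := by simp
  have hhd : ∀ k, n ≤ k → h.coeff k = 0 := by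
    intro k hk
    obtain ⟨k, rfl⟩ : ∃ k', k = k' + 1 := ⟨k - 1, by omega⟩
    simp only [h, Polynomial.coeff_sub, Polynomial.coeff_add, Polynomial.coeff_C_mul, sub_mul,
      Polynomial.coeff_X_mul, hgd _ hk, hq _ hk]
    rcases Nat.lt_or_ge k n with hk' | hk'
    · have hkn : k + 1 = n := by omega
      have h1 : A.charpoly.coeff (k+1) = 1 := by
        have h3 : A.charpoly.coeff A.charpoly.natDegree = 1 := A.charpoly_monic
        rwa [show A.charpoly.natDegree = k + 1 by omega] at h3
      have h2 : g.coeff k = c l := by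
        rw [← hgc l]; congr 1; simp [l]; omega
      rw [h1, h2]; ring
    · rw [hgd _ hk', Polynomial.coeff_eq_zero_of_natDegree_lt (by omega : A.charpoly.natDegree < k+1)]
      ring
  have hh0 : Polynomial.aeval A h *ᵥ v = 0 := by
    simp only [h, map_sub, map_add, map_mul, Polynomial.aeval_X, Polynomial.aeval_C, Matrix.aeval_self_charpoly,
      mul_zero, sub_zero, add_mulVec, ← mulVec_mulVec, hgu, sub_mulVec, Algebra.algebraMap_eq_smul_one,
      smul_mulVec, one_mulVec]
    rw [← hu1, hcl]
    simp
  have hhz : h = 0 := by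
    rw [kry_mulVec A v h hhd] at hh0
    have := Matrix.eq_zero_of_mulVec_eq_zero hK hh0
    ext k
    rcases Nat.lt_or_ge k n with hk' | hk'
    · exact congrFun this ⟨k, hk'⟩
    · exact hhd k hk'
  have hcl0 : c l ≠ 0 := by
    intro h0
    have h1 : (Polynomial.X - Polynomial.C μ) * g = 0 := by simpa [h, h0] using hhz
    have h2 : g = 0 := (mul_eq_zero.1 h1).resolve_left (Polynomial.X_sub_C_ne_zero μ)
    apply hu0
    rw [← hgu, h2]; simp
  have := congrArg (Polynomial.eval μ) hhz
  simp [h] at this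
  apply mul_left_cancel₀ hcl0
  linear_combination -this

open scoped Matrix.Norms.Elementwise in
lemma simple_imp {n : ℕ} (X : Matrix (Fin n) (Fin n) ℂ) (μ : ℂ) (hr : X.charpoly.IsRoot μ)
    (hd : X.charpoly.derivative.eval μ ≠ 0) :
    ∃ U : Set (Matrix (Fin n) (Fin n) ℂ), IsOpen U ∧ X ∈ U ∧
        ∃ φ : {Y : Matrix (Fin n) (Fin n) ℂ // Y ∈ U} → ℂ,
          Continuous φ ∧ ∀ Y, φ Y ∈ spectrum ℂ Y.val := by
  let E := Matrix (Fin n) (Fin n) ℂ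
  let F : E × ℂ → ℂ := fun p => p.1.charpoly.eval p.2
  have hFeq : ∀ p : E × ℂ, F p = (Matrix.scalar (Fin n) p.2 - p.1).det := fun p => by
    simp only [F]; rw [Matrix.eval_charpoly]
  have hF : ContDiff ℂ 1 F := by
    have : F = fun p : E × ℂ => (Matrix.scalar (Fin n) p.2 - p.1).det := funext hFeq
    rw [this]
    simp only [Matrix.det_apply]
    refine ContDiff.sum fun σ _ => ContDiff.const_smul _ (contDiff_prod fun i _ => ?_)
    have h1 : ContDiff ℂ 1 (fun p : E × ℂ => p.1 (σ i) i) := by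
      have : ContDiff ℂ 1 (fun p : E × ℂ => (p.1 : Fin n → Fin n → ℂ)) := contDiff_fst
      exact contDiff_pi.1 (contDiff_pi.1 this (σ i)) i
    simp only [Matrix.sub_apply, Matrix.scalar_apply]
    refine ContDiff.sub ?_ h1
    by_cases h : σ i = i
    · simp only [h, Matrix.diagonal_apply_eq]
      exact contDiff_snd
    · simp only [Matrix.diagonal_apply_ne _ h]
      exact contDiff_const
  have hFs : HasStrictFDerivAt F (fderiv ℂ F (X, μ)) (X, μ) :=
    hF.contDiffAt.hasStrictFDerivAt (by norm_num)
  set F' := fderiv ℂ F (X, μ) with hF'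
  have hF01 : F' (0, 1) = X.charpoly.derivative.eval μ := by
    have h1 : HasDerivAt (fun z : ℂ => ((X, z) : E × ℂ)) (0, 1) μ :=
      (hasDerivAt_const μ X).prodMk (hasDerivAt_id μ)
    have h2 := hFs.hasFDerivAt.comp_hasDerivAt μ h1
    exact h2.unique (X.charpoly.hasDerivAt μ)
  let G' : E × ℂ →L[ℂ] E × ℂ := (ContinuousLinearMap.fst ℂ E ℂ).prod F'
  have hinj : Function.Injective G'.toLinearMap := by
    rw [← LinearMap.ker_eq_bot, LinearMap.ker_eq_bot']
    rintro ⟨Y, z⟩ h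
    have h1 : Y = 0 := congrArg Prod.fst h
    have h2 : F' (Y, z) = 0 := congrArg Prod.snd h
    subst h1
    have h3 : ((0 : E), z) = z • ((0 : E), (1:ℂ)) := by simp
    rw [h3, map_smul, hF01, smul_eq_mul] at h2
    have := (mul_eq_zero.1 h2).resolve_right hd
    simp [this]
  let e' : (E × ℂ) ≃L[ℂ] (E × ℂ) := (LinearEquiv.ofInjectiveEndo _ hinj).toContinuousLinearEquiv
  have hG : HasStrictFDerivAt (fun p : E × ℂ => (p.1, F p)) (e' : E × ℂ →L[ℂ] E × ℂ) (X, μ) := by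
    have : (e' : E × ℂ →L[ℂ] E × ℂ) = G' := by ext x <;> rfl
    rw [this]
    exact (ContinuousLinearMap.fst ℂ E ℂ).hasStrictFDerivAt.prodMk hFs
  let e := hG.toOpenPartialHomeomorph
  have he : ∀ p, e p = (p.1, F p) := fun p => rfl
  have hmem : (X, (0:ℂ)) ∈ e.target := by
    have := hG.image_mem_toOpenPartialHomeomorph_target
    have h0 : F (X, μ) = 0 := hr
    rw [h0] at this
    exact this
  refine ⟨(fun Y : E => (Y, (0:ℂ))) ⁻¹' e.target, e.open_target.preimage (by fun_prop), hmem,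
    fun Y => (e.symm (Y.1, 0)).2, ?_, ?_⟩
  · refine continuous_snd.comp ?_
    exact e.continuousOn_symm.comp_continuous (f := fun Y : {Y : E // Y ∈ (fun Y : E => (Y, (0:ℂ))) ⁻¹' e.target} => ((Y.1, 0) : E × ℂ)) (by fun_prop) (fun Y => Y.2)
  · intro Y
    have h1 := e.right_inv Y.2
    rw [he] at h1
    have h2 : (e.symm (Y.1, 0)).1 = Y.1 := congrArg Prod.fst h1
    have h3 : F (e.symm (Y.1, 0)) = 0 := congrArg Prod.snd h1
    rw [Matrix.mem_spectrum_iff_isRoot_charpoly]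
    simp only [F, h2] at h3
    exact h3

lemma tri_basis (n : ℕ) : ∀ (V : Type) [AddCommGroup V] [Module ℂ V] [FiniteDimensional ℂ V]
    (_ : Module.finrank ℂ V = n) (f : V →ₗ[ℂ] V),
    ∃ b : Module.Basis (Fin n) ℂ V, ∀ i j, i < j → b.repr (f (b j)) i = 0 := by
  induction n with
  | zero =>
    intro V _ _ _ hV f
    exact ⟨Module.finBasisOfFinrankEq ℂ V hV, fun i => i.elim0⟩
  | succ n ih =>
    intro V _ _ _ hV f
    have : Nontrivial V := Module.nontrivial_of_finrank_pos (R := ℂ) (by omega)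
    obtain ⟨μ, hμ⟩ := Module.End.exists_eigenvalue (K := ℂ) (V := Module.Dual ℂ V) f.dualMap
    obtain ⟨ℓ, hℓ1, hℓ0⟩ := hμ.exists_hasEigenvector
    rw [Module.End.mem_eigenspace_iff] at hℓ1
    have hℓf : ∀ x, ℓ (f x) = μ * ℓ x := fun x => by
      simpa using congrArg (fun l => l x) hℓ1
    obtain ⟨y, hy⟩ : ∃ y, ℓ y ≠ 0 := by
      by_contra! hcon
      exact hℓ0 (LinearMap.ext hcon)
    let W := LinearMap.ker ℓ
    have hW : Module.finrank ℂ W = n := by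
      have := Module.Dual.finrank_ker_add_one_of_ne_zero hℓ0
      simp only [W]; omega
    have hfW : ∀ x ∈ W, f x ∈ W := by
      intro x hx
      simp only [W, LinearMap.mem_ker] at hx ⊢
      rw [hℓf, hx, mul_zero]
    obtain ⟨b, hb⟩ := ih W hW (f.restrict hfW)
    let b' := Module.Basis.mkFinCons y b
      (by
        intro c x hx h
        have h1 := congrArg ℓ h
        have hx' : ℓ x = 0 := hx
        simp [hx'] at h1
        exact h1.resolve_right hy)
      (by
        intro z
        refine ⟨-(ℓ z / ℓ y), ?_⟩
        simp only [W, LinearMap.mem_ker, map_add, map_smul, smul_eq_mul]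
        field_simp; ring)
    have hb' : ∀ i : Fin n, b' i.succ = (b i : V) := fun i => by
      simp [b']
    have hrepr : ∀ w : W, ∀ i : Fin (n+1), b'.repr (w : V) i =
        (Fin.cons 0 (fun j => b.repr w j) : Fin (n+1) → ℂ) i := by
      intro w i
      have h1 : (w : V) = ∑ k, b.repr w k • b' k.succ := by
        have h0 := congrArg (Subtype.val) (b.sum_repr w)
        simp only [hb']
        rw [← Submodule.subtype_apply, map_sum] at h0
        exact h0.symm
      rw [h1]
      simp only [map_sum, map_smul, Module.Basis.repr_self, Finsupp.coe_finsetSum, Finset.sum_apply,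
        Finsupp.smul_apply, smul_eq_mul, Finsupp.single_apply]
      refine Fin.cases ?_ (fun j => ?_) i
      · simp [Fin.succ_ne_zero]
      · simp
    refine ⟨b', fun i j hij => ?_⟩
    obtain ⟨j, rfl⟩ := Fin.exists_succ_eq.2 (Fin.ne_zero_of_lt hij)
    rw [hb']
    have h1 : f (b j : V) = ((f.restrict hfW (b j) : W) : V) := rfl
    rw [h1, hrepr]
    revert hij
    refine Fin.cases ?_ (fun i => ?_) i
    · simp
    · intro hij
      simp only [Fin.cons_succ]
      exact hb i j (by simpa using hij)

lemma tri_matrix {n : ℕ} (X : Matrix (Fin n) (Fin n) ℂ) :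
    ∃ P Q T : Matrix (Fin n) (Fin n) ℂ, P * Q = 1 ∧ Q * P = 1 ∧ X = P * T * Q ∧
      ∀ i j, i < j → T i j = 0 := by
  obtain ⟨b, hb⟩ := tri_basis n (Fin n → ℂ) (by simp) (toLin' X)
  refine ⟨(Pi.basisFun ℂ (Fin n)).toMatrix b, b.toMatrix (Pi.basisFun ℂ (Fin n)),
    LinearMap.toMatrix b b (toLin' X), ?_, ?_, ?_, ?_⟩
  · exact Module.Basis.toMatrix_mul_toMatrix_flip _ _
  · exact Module.Basis.toMatrix_mul_toMatrix_flip _ _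
  · rw [basis_toMatrix_mul_linearMap_toMatrix_mul_basis_toMatrix]
    exact (LinearMap.toMatrix'_toLin' X).symm
  · intro i j hij
    rw [LinearMap.toMatrix_apply]
    exact hb i j hij

lemma charpoly_conj' {n : ℕ} (P Q T : Matrix (Fin n) (Fin n) ℂ) (h1 : P * Q = 1) (h2 : Q * P = 1) :
    (P * T * Q).charpoly = T.charpoly := by
  have := Matrix.charpoly_units_conj (⟨P, Q, h1, h2⟩ : (Matrix (Fin n) (Fin n) ℂ)ˣ) T
  rw [Matrix.inv_eq_right_inv h1] at this
  exact this

lemma charpoly_lower {n : ℕ} (T : Matrix (Fin n) (Fin n) ℂ) (h : ∀ i j, i < j → T i j = 0) :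
    T.charpoly = ∏ i, (Polynomial.X - Polynomial.C (T i i)) := by
  rw [← Matrix.charpoly_transpose, Matrix.charpoly_of_isUpperTriangular]
  · simp
  · intro i j hij
    exact h j i hij

lemma exists_dir {n : ℕ} (X : Matrix (Fin n) (Fin n) ℂ) :
    ∃ (S : Matrix (Fin n) (Fin n) ℂ) (v : Fin n → ℂ),
      (∀ t : ℂ, (X + t • S).charpoly = X.charpoly) ∧ (kry S v).det ≠ 0 := by
  obtain ⟨P, Q, T, hPQ, hQP, rfl, hT⟩ := tri_matrix X
  let S : Matrix (Fin n) (Fin n) ℂ := Matrix.of fun i j => if (i : ℕ) = j + 1 then 1 else 0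
  let e : Fin n → ℂ := fun i => if (i : ℕ) = 0 then 1 else 0
  refine ⟨P * S * Q, P *ᵥ e, ?_, ?_⟩
  · intro t
    have : P * T * Q + t • (P * S * Q) = P * (T + t • S) * Q := by
      simp [mul_add, add_mul]
    rw [this, charpoly_conj' _ _ _ hPQ hQP, charpoly_conj' _ _ _ hPQ hQP, charpoly_lower _ hT,
      charpoly_lower]
    · refine Finset.prod_congr rfl fun i _ => ?_
      simp [S]
    · intro i j hij
      have : (i : ℕ) < j := hij
      simp [S, hT i j hij]
      omega
  · have hS : ∀ k : ℕ, k < n → S ^ k *ᵥ e = fun i : Fin n => if (i : ℕ) = k then 1 else 0 := by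
      intro k
      induction k with
      | zero => intro _; simp [e]
      | succ k ih =>
        intro hk
        rw [pow_succ', ← mulVec_mulVec, ih (by omega)]
        ext i
        simp only [mulVec, dotProduct, S, of_apply]
        rw [Finset.sum_eq_single (⟨k, by omega⟩ : Fin n)]
        · simp
        · intro b _ hb
          rw [if_neg (c := (b : ℕ) = k) (fun h => hb (Fin.ext h)), mul_zero]
        · simp
    have hpow : ∀ k : ℕ, (P * S * Q) ^ k = P * S ^ k * Q := by
      intro k
      induction k with
      | zero => simp [hPQ]
      | succ k ih =>
        rw [pow_succ, ih, pow_succ]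
        calc P * S ^ k * Q * (P * S * Q) = P * S ^ k * (Q * P) * S * Q := by simp only [mul_assoc]
          _ = _ := by rw [hQP]; simp only [mul_assoc, one_mul]
    have : kry (P * S * Q) (P *ᵥ e) = P := by
      ext i j
      simp only [kry, of_apply]
      rw [hpow, mulVec_mulVec, mul_assoc, hQP, mul_one, ← mulVec_mulVec, hS _ j.2]
      simp only [mulVec, dotProduct]
      rw [Finset.sum_eq_single j]
      · simp
      · intro b _ hb
        rw [if_neg (fun h => hb (Fin.ext h)), mul_zero]
      · simp
    rw [this]
    intro h0
    have := congrArg det hPQ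
    simp [h0] at this

lemma kry_continuous {n : ℕ} (v : Fin n → ℂ) :
    Continuous fun A : Matrix (Fin n) (Fin n) ℂ => (kry A v).det := by
  refine Continuous.matrix_det ?_
  unfold kry
  refine continuous_matrix fun i j => ?_
  simp only [of_apply]
  exact (continuous_apply i).comp (Continuous.matrix_mulVec (continuous_pow _) continuous_const)

lemma kry_smul {n : ℕ} (A : Matrix (Fin n) (Fin n) ℂ) (v : Fin n → ℂ) (t : ℂ) :
    (kry (t • A) v).det = (kry A v).det * ∏ j : Fin n, t ^ (j : ℕ) := by
  have : kry (t • A) v = kry A v * diagonal (fun j : Fin n => t ^ (j : ℕ)) := by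
    ext i j
    simp [kry, mul_diagonal, smul_pow, smul_mulVec, mul_comm]
  rw [this, det_mul, det_diagonal]

lemma exists_near {n : ℕ} (X S : Matrix (Fin n) (Fin n) ℂ) (v : Fin n → ℂ)
    (hS : (kry S v).det ≠ 0) (U : Set (Matrix (Fin n) (Fin n) ℂ)) (hU : IsOpen U) (hX : X ∈ U) :
    ∃ t : ℂ, X + t • S ∈ U ∧ (kry (X + t • S) v).det ≠ 0 := by
  by_contra! hcon
  let D : ℂ → ℂ := fun t => (kry (X + t • S) v).det
  -- entire
  have hD : AnalyticOnNhd ℂ D Set.univ := by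
    apply DifferentiableOn.analyticOnNhd _ isOpen_univ
    apply Differentiable.differentiableOn
    have hpow : ∀ k : ℕ, ∀ i j, Differentiable ℂ fun t : ℂ => ((X + t • S) ^ k) i j := by
      intro k
      induction k with
      | zero => intro i j; simp
      | succ k ih =>
        intro i j
        simp only [pow_succ, mul_apply]
        refine Differentiable.fun_sum fun l _ => (ih i l).mul ?_
        simp only [Matrix.add_apply, Matrix.smul_apply, smul_eq_mul]
        fun_prop
    simp only [D, Matrix.det_apply]
    refine Differentiable.fun_sum fun σ _ => Differentiable.const_smul ?_ _
    refine Differentiable.fun_finsetProd fun i _ => ?_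
    simp only [kry, of_apply, mulVec, dotProduct]
    exact Differentiable.fun_sum fun l _ => (hpow _ _ _).mul_const _
  have hev : D =ᶠ[nhds 0] fun _ => 0 := by
    have hc : Continuous fun t : ℂ => X + t • S := by fun_prop
    have : ∀ᶠ t in nhds (0:ℂ), X + t • S ∈ U :=
      hc.continuousAt.eventually_mem (hU.mem_nhds (by simpa using hX))
    filter_upwards [this] with t ht using hcon t ht
  have hD0 : D = fun _ => 0 := hD.eq_of_eventuallyEq analyticOnNhd_const hev
  have hz : ∀ s : ℂ, s ≠ 0 → (kry (S + s • X) v).det = 0 := by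
    intro s hs
    have h1 : S + s • X = s • (X + s⁻¹ • S) := by
      rw [smul_add, smul_smul, mul_inv_cancel₀ hs, one_smul, add_comm]
    rw [h1, kry_smul]
    have : D s⁻¹ = 0 := by rw [hD0]
    simp only [D] at this
    rw [this, zero_mul]
  have hc : Continuous fun s : ℂ => (kry (S + s • X) v).det :=
    (kry_continuous v).comp (by fun_prop)
  have : (fun s : ℂ => (kry (S + s • X) v).det) = fun _ => 0 :=
    Continuous.ext_on (dense_compl_singleton (0:ℂ)) hc continuous_const fun s hs => hz s hs
  apply hS
  simpa using congrFun this 0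




/-- A matrix `X ∈ M_n` has an open neighborhood admitting a continuous
eigenvalue selection iff `X` has at least one simple eigenvalue (an eigenvalue whose
multiplicity as a root of the characteristic polynomial equals `1`). -/
theorem nbhd_continuous_eigenvalue_selection_iff_simple_eigenvalue
    (n : ℕ) (hn : 1 ≤ n) (X : Matrix (Fin n) (Fin n) ℂ) :
    (∃ U : Set (Matrix (Fin n) (Fin n) ℂ), IsOpen U ∧ X ∈ U ∧
        ∃ φ : {Y : Matrix (Fin n) (Fin n) ℂ // Y ∈ U} → ℂ,
          Continuous φ ∧ ∀ Y, φ Y ∈ spectrum ℂ Y.val) ↔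
    (∃ μ ∈ spectrum ℂ X, Polynomial.rootMultiplicity μ X.charpoly = 1) := by
  constructor
  · rintro ⟨U, hU, hX, φ, hφ, hsp⟩
    obtain ⟨S, v, hS, hdet⟩ := exists_dir X
    obtain ⟨t, htU, htd⟩ := exists_near X S v hdet U hU hX
    set A := X + t • S with hA
    have hAc : A.charpoly = X.charpoly := hS t
    set lam := φ ⟨A, htU⟩ with hlam
    have hroot : X.charpoly.IsRoot lam := by
      rw [← hAc, ← Matrix.mem_spectrum_iff_isRoot_charpoly]
      exact hsp ⟨A, htU⟩
    refine ⟨lam, Matrix.mem_spectrum_iff_isRoot_charpoly.2 hroot, ?_⟩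
    by_contra hne
    set m := Polynomial.rootMultiplicity lam X.charpoly with hm
    have hp0 : X.charpoly ≠ 0 := X.charpoly_monic.ne_zero
    have hmpos : 0 < m := (Polynomial.rootMultiplicity_pos hp0).2 hroot
    have hm2 : 2 ≤ m := by omega
    obtain ⟨q, hq, hndvd⟩ := Polynomial.exists_eq_pow_rootMultiplicity_mul_and_not_dvd
      X.charpoly hp0 lam
    rw [← hm] at hq
    have hq0 : q.eval lam ≠ 0 := fun h0 => hndvd (Polynomial.dvd_iff_isRoot.2 h0)
    have hqne : q ≠ 0 := by rintro rfl; simp at hq0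
    have hqdeg : q.natDegree + m = n := by
      have h1 : X.charpoly.natDegree = n := by simp
      rw [hq, Polynomial.natDegree_mul (pow_ne_zero _ (Polynomial.X_sub_C_ne_zero _)) hqne] at h1
      simp at h1
      omega
    obtain ⟨R, hR⟩ := cyc hn A v htd q
      (fun k hk => Polynomial.coeff_eq_zero_of_natDegree_lt (by omega))
    classical
    let Φ : Matrix (Fin n) (Fin n) ℂ → ℂ := fun Y => if h : Y ∈ U then φ ⟨Y, h⟩ else 0
    have hΦ : ContinuousOn Φ U := by
      rw [continuousOn_iff_continuous_domRestrict]
      convert hφ using 1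
      ext Y
      simp [Φ]
    let g : ℂ → ℂ := fun z => Φ (A + z • R)
    have hL : Continuous fun z : ℂ => A + z • R := by fun_prop
    have hV : IsOpen ((fun z : ℂ => A + z • R) ⁻¹' U) := hU.preimage hL
    have hg : ContinuousOn g ((fun z : ℂ => A + z • R) ⁻¹' U) :=
      hΦ.comp hL.continuousOn (fun z hz => hz)
    have h0V : (0:ℂ) ∈ ((fun z : ℂ => A + z • R) ⁻¹' U) := by simpa using htU
    have hg0 : g 0 = lam := by simp [g, Φ, htU, hlam]
    have hqg : ∀ᶠ z in nhds (0:ℂ), q.eval (g z) ≠ 0 := by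
      have hc : ContinuousAt (fun z => q.eval (g z)) 0 :=
        q.continuous.continuousAt.comp (hg.continuousAt (hV.mem_nhds h0V))
      exact hc.eventually_ne (by rw [hg0]; exact hq0)
    obtain ⟨r, hr, hball⟩ := Metric.eventually_nhds_iff_ball.1
      (hqg.and (hV.mem_nhds h0V))
    refine root_lemma m hm2 r hr (fun z => g z - lam) ?_ ?_
    · exact (hg.mono fun z hz => (hball z hz).2).sub continuousOn_const
    · intro z hz
      obtain ⟨hz1, hz2⟩ := hball z hz
      have hz2' : A + z • R ∈ U := hz2
      have hgz : g z ∈ spectrum ℂ (A + z • R) := by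
        have := hsp ⟨A + z • R, hz2'⟩
        simpa [g, Φ, hz2'] using this
      have h1 := hR z _ hgz
      rw [hAc, hq] at h1
      simp only [Polynomial.eval_mul, Polynomial.eval_pow, Polynomial.eval_sub,
        Polynomial.eval_X, Polynomial.eval_C] at h1
      exact mul_right_cancel₀ hz1 h1
  · rintro ⟨μ, hμ, hmult⟩
    have hr := Matrix.mem_spectrum_iff_isRoot_charpoly.1 hμ
    refine simple_imp X μ hr ?_
    intro hd
    have := (Polynomial.one_lt_rootMultiplicity_iff_isRoot X.charpoly_monic.ne_zero).2 ⟨hr, hd⟩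
    omega
end
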